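/- arXiv:2403.04618 — 5 statements merged into one kernel-verified Lean document; each statement's English description precedes it below -/
import Mathlib

section
/- Coherence implies confluence (main theorem): every coherent CCS^spt process is structurally confluent for constructively enabled reductions. Precisely, if P is coherent, Q is a derivative of P, and Q --τ:H₁[R₁]--> Q₁ and Q --τ:H₂[R₂]--> Q₂ are c-enabled reductions with Q₁ ≢ Q₂, then there exist a process Q', subsets H₁' ⊆ H₁ and H₂' ⊆ H₂ and processes R₁', R₂' such that Q₁ --τ:H₂'[R₂']--> Q' and Q₂ --τ:H₁'[R₁']--> Q', and both reconverging reductions are again c-enabled. -/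
set_option autoImplicit true

namespace CCSspt

/-- Labels: channel names `a ∈ 𝒜`, co-names `ā ∈ 𝒜̄`, clock names `σ ∈ 𝒞`. -/
inductive Label : Type
  | name (a : ℕ)
  | coname (a : ℕ)
  | clock (c : ℕ)
  deriving DecidableEq

namespace Label

/-- The involution `ℓ ↦ ℓ̄`. -/
def bar : Label → Label
  | name a => coname a
  | coname a => name a
  | clock c => clock c

@[simp] theorem bar_bar (l : Label) : l.bar.bar = l := by cases l <;> rfl

/-- rendez-vous labels `ℛ = 𝒜 ∪ 𝒜̄` -/
def isChan : Label → Prop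
  | name _ => True
  | coname _ => True
  | clock _ => False

/-- clock labels `𝒞` -/
def isClock : Label → Prop
  | clock _ => True
  | _ => False

/-- input labels `𝒜` -/
def isInput : Label → Prop
  | name _ => True
  | _ => False

/-- output labels `𝒜̄` -/
def isOutput : Label → Prop
  | coname _ => True
  | _ => False

end Label

/-- `K̄ = {ℓ̄ : ℓ ∈ K}` -/
def barSet (K : Set Label) : Set Label := Label.bar '' K

def chanLabels : Set Label := {l | l.isChan}
def clockLabels : Set Label := {l | l.isClock}

/-- Actions `Act = ℒ ∪ {τ}`. -/
inductive Act : Type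
  | vis (l : Label)
  | tau
  deriving DecidableEq

namespace Act

def isClock : Act → Prop
  | vis l => l.isClock
  | tau => False

def isChan : Act → Prop
  | vis l => l.isChan
  | tau => False

end Act

/-- the synchronisation action `ℓ | ℓ̄`: `τ` for rendez-vous labels, `σ` for clocks -/
def Label.sync : Label → Act
  | .clock c => .vis (.clock c)
  | .name _ => .tau
  | .coname _ => .tau

def visSet (K : Set Label) : Set Act := Act.vis '' K

/-- CCS^spt processes.  Process identifiers `ident n` have defining
equations given by an environment `env : ℕ → Proc`. -/
inductive Proc : Type
  | nil
  | pre (l : Label) (H : Set Label) (P : Proc)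
  | sum (P Q : Proc)
  | par (P Q : Proc)
  | restr (P : Proc) (L : Set Label)
  | hide (P : Proc) (L : Set Label)
  | ident (n : ℕ)

/-- visible labels `vA(P)` -/
inductive VisLabel (env : ℕ → Proc) : Proc → Label → Prop
  | pre_act : VisLabel env (.pre l H P) l
  | pre_blk (h : x ∈ H) : VisLabel env (.pre l H P) x
  | pre_cont : VisLabel env P x → VisLabel env (.pre l H P) x
  | sum_l : VisLabel env P x → VisLabel env (.sum P Q) x
  | sum_r : VisLabel env Q x → VisLabel env (.sum P Q) x
  | par_l : VisLabel env P x → VisLabel env (.par P Q) x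
  | par_r : VisLabel env Q x → VisLabel env (.par P Q) x
  | restr : VisLabel env P x → x ∉ L → x.bar ∉ L → VisLabel env (.restr P L) x
  | hide : VisLabel env P x → x ∉ L → x.bar ∉ L → VisLabel env (.hide P L) x
  | ident : VisLabel env (env n) x → VisLabel env (.ident n) x

/-- structural congruence `≡` -/
inductive SC (env : ℕ → Proc) : Proc → Proc → Prop
  | refl (P) : SC env P P
  | symm : SC env P Q → SC env Q P
  | trans : SC env P Q → SC env Q R → SC env P R
  | pre_congr : SC env P Q → SC env (.pre l H P) (.pre l H Q)
  | sum_congr : SC env P P' → SC env Q Q' → SC env (.sum P Q) (.sum P' Q')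
  | par_congr : SC env P P' → SC env Q Q' → SC env (.par P Q) (.par P' Q')
  | restr_congr : SC env P Q → SC env (.restr P L) (.restr Q L)
  | hide_congr : SC env P Q → SC env (.hide P L) (.hide Q L)
  | const : SC env (.ident n) (env n)
  | sum_comm : SC env (.sum P Q) (.sum Q P)
  | sum_assoc : SC env (.sum (.sum P Q) R) (.sum P (.sum Q R))
  | sum_zero : SC env (.sum P .nil) P
  | sum_idem : SC env (.sum P P) P
  | par_comm : SC env (.par P Q) (.par Q P)
  | par_assoc : SC env (.par (.par P Q) R) (.par P (.par Q R))
  | par_zero : SC env (.par P .nil) P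
  | restr_restr : SC env (.restr (.restr P L) L') (.restr P (L ∪ L'))
  | hide_hide : SC env (.hide (.hide P L) L') (.hide P (L ∪ L'))
  | restr_nil : SC env (.restr .nil L) .nil
  | hide_nil : SC env (.hide .nil L) .nil
  | restr_pre_in (h : l ∈ L ∨ l.bar ∈ L) : SC env (.restr (.pre l H P) L) .nil
  | restr_pre_out (h₁ : l ∉ L) (h₂ : l.bar ∉ L) :
      SC env (.restr (.pre l H P) L) (.pre l H (.restr P L))
  | restr_sum : SC env (.restr (.sum P Q) L) (.sum (.restr P L) (.restr Q L))
  | restr_scope_sum (h : ∀ x, VisLabel env P x → x ∉ L ∧ x.bar ∉ L) :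
      SC env (.restr (.sum P Q) L) (.sum P (.restr Q L))
  | restr_scope_par (h : ∀ x, VisLabel env P x → x ∉ L ∧ x.bar ∉ L) :
      SC env (.restr (.par P Q) L) (.par P (.restr Q L))
  | restr_par (h : ∀ x, VisLabel env P x → VisLabel env Q x.bar → x ∉ L ∧ x.bar ∉ L) :
      SC env (.restr (.par P Q) L) (.par (.restr P L) (.restr Q L))

/-- strong initial actions `iA(P)` -/
inductive InitAct (env : ℕ → Proc) : Proc → Act → Prop
  | pre : InitAct env (.pre l H P) (.vis l)
  | sum_l : InitAct env P a → InitAct env (.sum P Q) a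
  | sum_r : InitAct env Q a → InitAct env (.sum P Q) a
  | par_l : InitAct env P a → ¬ a.isClock → InitAct env (.par P Q) a
  | par_r : InitAct env Q a → ¬ a.isClock → InitAct env (.par P Q) a
  | par_sync : InitAct env P (.vis l) → InitAct env Q (.vis l.bar) →
      InitAct env (.par P Q) l.sync
  | restr : InitAct env P a → (∀ l : Label, a = .vis l → l ∉ L ∧ l.bar ∉ L) →
      InitAct env (.restr P L) a
  | hide_keep : InitAct env P a → (∀ l : Label, a = .vis l → l ∉ L) →
      InitAct env (.hide P L) a
  | hide_tau : InitAct env P (.vis l) → l ∈ L → InitAct env (.hide P L) .tau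
  | ident : InitAct env (env n) a → InitAct env (.ident n) a

/-- `īA(P) = {ℓ̄ : ℓ ∈ iA(P)}`, as a set of actions -/
def coInit (env : ℕ → Proc) (P : Proc) : Set Act :=
  {a | ∃ l : Label, a = .vis l.bar ∧ InitAct env P (.vis l)}

/-- the `race(P|Q)` component of rule (Par₃) -/
def race (env : ℕ → Proc) (P Q : Proc) (l : Label) (H₁ H₂ : Set Act) : Set Act :=
  {a | a = Act.tau ∧
    (¬ (H₁ ∩ coInit env Q ⊆ {Act.vis l}) ∨ ¬ (H₂ ∩ coInit env P ⊆ {Act.vis l.bar}))}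

/-- the labelled transition relation `P --α:H[R]--> Q` -/
inductive Step (env : ℕ → Proc) : Proc → Act → Set Act → Proc → Proc → Prop
  | act : Step env (.pre l H P) (.vis l) (visSet H) .nil P
  | struct : Step env P' a H R' Q' → SC env P P' → SC env Q Q' → SC env R R' →
      Step env P a H R Q
  | sum_l : Step env P a H R P' → Step env (.sum P Q) a H R P'
  | sum_r : Step env Q a H R Q' → Step env (.sum P Q) a H R Q'
  | par_l : Step env P a H R P' → ¬ a.isClock →
      Step env (.par P Q) a H (.par R Q) (.par P' Q)
  | par_r : Step env Q a H R Q' → ¬ a.isClock →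
      Step env (.par P Q) a H (.par P R) (.par P Q')
  | par_sync : Step env P (.vis l) H₁ R₁ P' → Step env Q (.vis l.bar) H₂ R₂ Q' →
      Step env (.par P Q) l.sync (H₁ ∪ H₂ ∪ race env P Q l H₁ H₂) (.par R₁ R₂) (.par P' Q')
  | restr : Step env P a H R Q → (∀ l : Label, a = .vis l → l ∉ L ∧ l.bar ∉ L) →
      Step env (.restr P L) a (H \ visSet (L ∪ barSet L)) (.restr R L) (.restr Q L)
  | hide_keep : Step env P a H R Q → (∀ l : Label, a = .vis l → l ∉ L) →
      Step env (.hide P L) a (H \ visSet L) (.hide R L) (.hide Q L)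
  | hide_tau : Step env P (.vis l) H R Q → l ∈ L →
      Step env (.hide P L) .tau (H \ visSet L) (.hide R L) (.hide Q L)

/-- `P --α--> Q` -/
def StepA (env : ℕ → Proc) (P : Proc) (a : Act) (Q : Proc) : Prop :=
  ∃ H R, Step env P a H R Q

/-- `Q` is a derivative of `P` -/
def Deriv (env : ℕ → Proc) : Proc → Proc → Prop :=
  Relation.ReflTransGen (fun P Q => ∃ a, StepA env P a Q)

/-- weak initial actions `iA^τ(P)` -/
inductive WInit (env : ℕ → Proc) : Proc → Act → Prop
  | init : InitAct env P a → WInit env P a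
  | step : StepA env P .tau Q → WInit env Q a → WInit env P a

/-- potential actions `iA*(P) ⊆ ℒ` -/
inductive PotAct (env : ℕ → Proc) : Proc → Label → Prop
  | init : InitAct env P (.vis l) → PotAct env P l
  | step : StepA env P a Q → (a = Act.tau ∨ ∃ l' : Label, l'.isChan ∧ a = .vis l') →
      PotAct env Q l → PotAct env P l

/-- `īA^τ(P)` as a set of actions -/
def coWInit (env : ℕ → Proc) (P : Proc) : Set Act :=
  {a | ∃ l : Label, a = .vis l.bar ∧ WInit env P (.vis l)}

/-- `īA*(P)` as a set of actions -/
def coPot (env : ℕ → Proc) (P : Proc) : Set Act :=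
  {a | ∃ l : Label, a = .vis l.bar ∧ PotAct env P l}

/-- weakly enabled: `H ∩ (īA(R) ∪ {τ}) = ∅` -/
def WEnabled (env : ℕ → Proc) (H : Set Act) (R : Proc) : Prop :=
  H ∩ (coInit env R ∪ {Act.tau}) = ∅

/-- strongly enabled: `H ∩ (īA^τ(R) ∪ {τ}) = ∅` -/
def SEnabled (env : ℕ → Proc) (H : Set Act) (R : Proc) : Prop :=
  H ∩ (coWInit env R ∪ {Act.tau}) = ∅

/-- constructively enabled: `H ∩ (īA*(R) ∪ {τ}) = ∅` -/
def CEnabled (env : ℕ → Proc) (H : Set Act) (R : Proc) : Prop :=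
  H ∩ (coPot env R ∪ {Act.tau}) = ∅

/-- the c-actions `α₁:H₁[E₁]` and `α₂:H₂[E₂]` are interference-free -/
def InterfFree (env : ℕ → Proc) (a₁ : Act) (H₁ : Set Act) (E₁ : Proc)
    (a₂ : Act) (H₂ : Set Act) (E₂ : Proc) : Prop :=
  (a₁ ≠ a₂ → a₁ ∉ H₂ ∧ a₂ ∉ H₁) ∧
  (a₂ = Act.tau → H₁ ∩ (coPot env E₁ ∪ {Act.tau}) = ∅) ∧
  (a₁ = Act.tau → H₂ ∩ (coPot env E₂ ∪ {Act.tau}) = ∅)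

/-- residual transition `P ⇒α Q` -/
def Residual (env : ℕ → Proc) : Act → Proc → Proc → Prop
  | .vis l, P, Q => StepA env P (.vis l) Q ∨ SC env P Q
  | .tau, P, Q => StepA env P .tau Q ∨
      ∃ l : Label, l.isChan ∧ (StepA env P (.vis l) Q ∨ StepA env P (.vis l.bar) Q)

/-- `α` is a rendez-vous (channel) action, i.e. `α ∈ ℛ` -/
def ChanAct (a : Act) : Prop := ∃ l : Label, l.isChan ∧ a = .vis l

/-- structural coherence -/
def Coherent (env : ℕ → Proc) (P : Proc) : Prop :=
  ∀ Q, Deriv env P Q →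
    ∀ a₁ H₁ E₁ Q₁ a₂ H₂ E₂ Q₂,
      Step env Q a₁ H₁ E₁ Q₁ → Step env Q a₂ H₂ E₂ Q₂ →
      (a₁ ≠ a₂ ∨ ¬ SC env Q₁ Q₂ ∨ (ChanAct a₁ ∧ ChanAct a₂ ∧ a₁ ∉ H₂ ∧ a₂ ∉ H₁)) →
      InterfFree env a₁ H₁ E₁ a₂ H₂ E₂ →
      ∃ H₁' H₂' E₁' E₂' Q',
        H₁' ⊆ H₁ ∧ H₂' ⊆ H₂ ∧
        Step env Q₁ a₂ H₂' E₂' Q' ∧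
        Step env Q₂ a₁ H₁' E₁' Q' ∧
        Residual env a₂ E₁ E₁' ∧
        Residual env a₁ E₂ E₂' ∧
        (((ChanAct a₁ ∧ ChanAct a₂ ∧ (a₁ ≠ a₂ ∨ ¬ SC env Q₁ Q₂)) ∨ a₁.isClock ∨ a₂.isClock) →
          StepA env E₁ a₂ E₁' ∧ StepA env E₂ a₁ E₂')

/-- precedence policies `π = (L, ⟶̇)` with `⟶̇ ⊆ L × L` -/
structure Policy where
  alph : Set Label
  prec : Label → Label → Prop
  prec_dom : ∀ {l₁ l₂}, prec l₁ l₂ → l₁ ∈ alph ∧ l₂ ∈ alph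

namespace Policy

/-- concurrent independence `π ⊩ ℓ₁ ◇ ℓ₂` -/
def Indep (π : Policy) (l₁ l₂ : Label) : Prop :=
  l₁ ∈ π.alph ∧ l₂ ∈ π.alph ∧ ¬ π.prec l₁ l₂ ∧ ¬ π.prec l₂ l₁

/-- the ordering `π₁ ⪯ π₂` -/
def le (π₁ π₂ : Policy) : Prop :=
  π₁.alph ⊆ π₂.alph ∧
  ∀ l₁ l₂, l₁ ∈ π₁.alph → l₂ ∈ π₁.alph → π₂.prec l₁ l₂ → π₁.prec l₁ l₂

/-- the dual policy `π̄` -/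
def dual (π : Policy) : Policy where
  alph := barSet π.alph
  prec := fun x y =>
    x.bar ∈ π.alph ∧ y.bar ∈ π.alph ∧ (x.bar = y.bar ∨ π.Indep x.bar y.bar)
  prec_dom := by
    intro x y h
    exact ⟨⟨x.bar, h.1, Label.bar_bar x⟩, ⟨y.bar, h.2.1, Label.bar_bar y⟩⟩

/-- pivot policies: `π̄ ⪯ π` -/
def IsPivot (π : Policy) : Prop := Policy.le π.dual π

/-- inclusion of policies `π ⊆ π'` -/
def sub (π π' : Policy) : Prop :=
  π.alph ⊆ π'.alph ∧ ∀ l₁ l₂, π.prec l₁ l₂ → π'.prec l₁ l₂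

/-- `π ∖ K`: restriction of `π` to the alphabet `L − (K ∪ K̄)` -/
def restrict (π : Policy) (K : Set Label) : Policy where
  alph := π.alph \ {l | l ∈ K ∨ l.bar ∈ K}
  prec := fun x y => π.prec x y ∧ ¬ (x ∈ K ∨ x.bar ∈ K) ∧ ¬ (y ∈ K ∨ y.bar ∈ K)
  prec_dom := by
    intro x y h
    exact ⟨⟨(π.prec_dom h.1).1, h.2.1⟩, ⟨(π.prec_dom h.1).2, h.2.2⟩⟩

end Policy

/-- the input-scheduled policy `π_is` -/
def piIS : Policy where
  alph := Set.univ
  prec := fun l₁ l₂ => l₁ = l₂ ∨ ((l₁.isInput ∨ l₁.isClock) ∧ (l₂.isInput ∨ l₂.isClock))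
  prec_dom := by intro l₁ l₂ _; exact ⟨trivial, trivial⟩

/-- conformance of a process to a policy -/
def Conforms (env : ℕ → Proc) (P : Proc) (π : Policy) : Prop :=
  ∀ Q, Deriv env P Q → ∀ (l : Label) (H : Set Act) (R Q' : Proc),
    Step env Q (.vis l) H R Q' →
      l ∈ π.alph ∧ ∀ l' : Label, Act.vis l' ∈ H → π.prec l' l

/-- `P : π` : `P` is coherent and conforms to `π` -/
def Spec (env : ℕ → Proc) (P : Proc) (π : Policy) : Prop :=
  Coherent env P ∧ Conforms env P π

/-- `π` is precedence-closed for `K` -/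
def PrecClosed (π : Policy) (K : Set Label) : Prop :=
  ∀ l₁ l₂, l₁ ∈ K → π.prec l₁ l₂ → l₂ ∈ K

/-- single-threaded processes: no parallel sub-process -/
inductive SingleThreaded (env : ℕ → Proc) : Proc → Prop
  | nil : SingleThreaded env .nil
  | pre : SingleThreaded env P → SingleThreaded env (.pre l H P)
  | sum : SingleThreaded env P → SingleThreaded env Q → SingleThreaded env (.sum P Q)
  | restr : SingleThreaded env P → SingleThreaded env (.restr P L)
  | hide : SingleThreaded env P → SingleThreaded env (.hide P L)
  | ident : SingleThreaded env (env n) → SingleThreaded env (.ident n)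

/-- unclocked processes: no clock prefix occurs -/
inductive Unclocked (env : ℕ → Proc) : Proc → Prop
  | nil : Unclocked env .nil
  | pre : ¬ l.isClock → Unclocked env P → Unclocked env (.pre l H P)
  | sum : Unclocked env P → Unclocked env Q → Unclocked env (.sum P Q)
  | par : Unclocked env P → Unclocked env Q → Unclocked env (.par P Q)
  | restr : Unclocked env P → Unclocked env (.restr P L)
  | hide : Unclocked env P → Unclocked env (.hide P L)
  | ident : Unclocked env (env n) → Unclocked env (.ident n)

/-- free processes: every action prefix has empty blocking set -/
inductive Free (env : ℕ → Proc) : Proc → Prop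
  | nil : Free env .nil
  | pre : Free env P → Free env (.pre l (∅ : Set Label) P)
  | sum : Free env P → Free env Q → Free env (.sum P Q)
  | par : Free env P → Free env Q → Free env (.par P Q)
  | restr : Free env P → Free env (.restr P L)
  | hide : Free env P → Free env (.hide P L)
  | ident : Free env (env n) → Free env (.ident n)

/-!
A `τ`-residual of a concurrent context is reached by a silent or rendez-vous transition, and the
potential actions `iA*` are closed backwards under exactly these transitions. Hence `iA*` can only
shrink along `τ`-residuals, so constructive enabledness is inherited by the reconverging reductions
of a coherence diamond.
-/

section

variable {env : ℕ → Proc} {E E' E₁ E₂ : Proc} {H H' H₁ H₂ : Set Act} {a : Act}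

theorem Label.isChan_bar {l : Label} : l.bar.isChan ↔ l.isChan := by
  cases l <;> rfl

theorem Residual.exists_stepA_of_tau (h : Residual env .tau E E') :
    ∃ a, (a = .tau ∨ ChanAct a) ∧ StepA env E a E' := by
  rcases h with hτ | ⟨l, hl, hvis | hbar⟩
  · exact ⟨.tau, .inl rfl, hτ⟩
  · exact ⟨.vis l, .inr ⟨l, hl, rfl⟩, hvis⟩
  · exact ⟨.vis l.bar, .inr ⟨l.bar, Label.isChan_bar.mpr hl, rfl⟩, hbar⟩

theorem StepA.coPot_subset (h : StepA env E a E') (ha : a = .tau ∨ ChanAct a) :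
    coPot env E' ⊆ coPot env E := by
  rintro _ ⟨l, rfl, hl⟩
  exact ⟨l, rfl, .step h ha hl⟩

theorem Residual.coPot_subset_of_tau (h : Residual env .tau E E') :
    coPot env E' ⊆ coPot env E := by
  obtain ⟨a, ha, hstep⟩ := h.exists_stepA_of_tau
  exact hstep.coPot_subset ha

theorem CEnabled.mono (he : CEnabled env H E) (hH : H' ⊆ H)
    (hE : coPot env E' ⊆ coPot env E) : CEnabled env H' E' :=
  Set.subset_eq_empty (Set.inter_subset_inter hH (Set.union_subset_union_left _ hE)) he

theorem interfFree_tau_tau_iff :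
    InterfFree env .tau H₁ E₁ .tau H₂ E₂ ↔ CEnabled env H₁ E₁ ∧ CEnabled env H₂ E₂ := by
  simp [InterfFree, CEnabled]

end

/-- Coherence implies confluence: every coherent process is
structurally confluent for constructively enabled reductions. -/
theorem coherence_implies_confluence (env : ℕ → Proc) (P Q : Proc)
    (hP : Coherent env P) (hQ : Deriv env P Q)
    (H₁ H₂ : Set Act) (R₁ R₂ Q₁ Q₂ : Proc)
    (h₁ : Step env Q Act.tau H₁ R₁ Q₁) (h₂ : Step env Q Act.tau H₂ R₂ Q₂)
    (he₁ : CEnabled env H₁ R₁) (he₂ : CEnabled env H₂ R₂)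
    (hne : ¬ SC env Q₁ Q₂) :
    ∃ (Q' : Proc) (H₁' H₂' : Set Act) (R₁' R₂' : Proc),
      H₁' ⊆ H₁ ∧ H₂' ⊆ H₂ ∧
      Step env Q₁ Act.tau H₂' R₂' Q' ∧ Step env Q₂ Act.tau H₁' R₁' Q' ∧
      CEnabled env H₂' R₂' ∧ CEnabled env H₁' R₁' := by
  obtain ⟨H₁', H₂', R₁', R₂', Q', hH₁, hH₂, hQ₁, hQ₂, hR₁, hR₂, -⟩ :=
    hP Q hQ _ _ _ _ _ _ _ _ h₁ h₂ (.inr (.inl hne)) (interfFree_tau_tau_iff.mpr ⟨he₁, he₂⟩)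
  have he₂' : CEnabled env H₂' R₂' := he₂.mono hH₂ hR₂.coPot_subset_of_tau
  have he₁' : CEnabled env H₁' R₁' := he₁.mono hH₁ hR₁.coPot_subset_of_tau
  exact ⟨Q', H₁', H₂', R₁', R₂', hH₁, hH₂, hQ₁, hQ₂, he₂', he₁'⟩

end CCSspt
end

section
/- Clock interference: let P be a coherent process offering weakly enabled transitions P --α:H₁[R₁]--> P₁ and P --σ:H₂[R₂]--> P₂, where σ ∈ 𝒞 is a clock and α ∈ Act with α ≠ σ. Then α ∈ H₂ or σ ∈ H₁. In particular, if α = τ then σ ∈ H₁. -/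
set_option autoImplicit true

namespace CCSspt

/-!
A clock synchronises with every parallel component, so the concurrent context of a clock transition
is structurally congruent to `0`. A process congruent to `0` has no transitions, hence no potential
actions either. Were `α:H₁[R₁]` and `σ:H₂[R₂]` not to block one another, the emptiness of `R₂` would
make them interference-free, and coherence would produce an `α`-transition of `R₂`, which is absurd.

That `P ≡ 0` excludes transitions needs an invariant of `≡` that every transition makes nonempty.
The initial actions `iA` will not do: `σ.0 | 0 ≡ σ.0`, yet only the right-hand side has `σ` as an
initial action.
-/

section Offers

/-- The actions offered by a process: an over-approximation of its initial actions which, unlike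
`iA`, is invariant under structural congruence. Clocks interleave like rendez-vous labels, every
synchronisation also offers `τ`, and hiding `L` turns the labels of `L ∪ L̄` (not only those of `L`)
into `τ`, in accordance with `VisLabel`. -/
inductive Offers (env : ℕ → Proc) : Proc → Act → Prop
  | pre : Offers env (.pre l H P) (.vis l)
  | sum_l : Offers env P a → Offers env (.sum P Q) a
  | sum_r : Offers env Q a → Offers env (.sum P Q) a
  | par_l : Offers env P a → Offers env (.par P Q) a
  | par_r : Offers env Q a → Offers env (.par P Q) a
  | par_sync : Offers env P (.vis l) → Offers env Q (.vis l.bar) → Offers env (.par P Q) .tau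
  | restr_vis : Offers env P (.vis l) → l ∉ L → l.bar ∉ L → Offers env (.restr P L) (.vis l)
  | restr_tau : Offers env P .tau → Offers env (.restr P L) .tau
  | hide_vis : Offers env P (.vis l) → l ∉ L → l.bar ∉ L → Offers env (.hide P L) (.vis l)
  | hide_mem : Offers env P (.vis l) → l ∈ L ∨ l.bar ∈ L → Offers env (.hide P L) .tau
  | hide_tau : Offers env P .tau → Offers env (.hide P L) .tau
  | ident : Offers env (env n) a → Offers env (.ident n) a

variable {env : ℕ → Proc} {P Q R : Proc} {a : Act} {l : Label} {H L L' : Set Label}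

@[simp]
theorem not_offers_nil : ¬ Offers env .nil a := nofun

@[simp]
theorem offers_pre : Offers env (.pre l H P) a ↔ a = .vis l :=
  ⟨fun | .pre => rfl, fun h => h ▸ .pre⟩

@[simp]
theorem offers_sum : Offers env (.sum P Q) a ↔ Offers env P a ∨ Offers env Q a :=
  ⟨fun | .sum_l h => .inl h | .sum_r h => .inr h, fun h => h.elim .sum_l .sum_r⟩

@[simp]
theorem offers_par_vis :
    Offers env (.par P Q) (.vis l) ↔ Offers env P (.vis l) ∨ Offers env Q (.vis l) :=
  ⟨fun | .par_l h => .inl h | .par_r h => .inr h, fun h => h.elim .par_l .par_r⟩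

@[simp]
theorem offers_par_tau :
    Offers env (.par P Q) .tau ↔ Offers env P .tau ∨ Offers env Q .tau ∨
      ∃ l : Label, Offers env P (.vis l) ∧ Offers env Q (.vis l.bar) :=
  ⟨fun | .par_l h => .inl h | .par_r h => .inr (.inl h) | .par_sync h h' => .inr (.inr ⟨_, h, h'⟩),
    fun | .inl h => .par_l h | .inr (.inl h) => .par_r h | .inr (.inr ⟨_, h, h'⟩) => .par_sync h h'⟩

@[simp]
theorem offers_restr_vis :
    Offers env (.restr P L) (.vis l) ↔ Offers env P (.vis l) ∧ l ∉ L ∧ l.bar ∉ L :=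
  ⟨fun | .restr_vis h hl hl' => ⟨h, hl, hl'⟩, fun ⟨h, hl, hl'⟩ => .restr_vis h hl hl'⟩

@[simp]
theorem offers_restr_tau : Offers env (.restr P L) .tau ↔ Offers env P .tau :=
  ⟨fun | .restr_tau h => h, .restr_tau⟩

@[simp]
theorem offers_hide_vis :
    Offers env (.hide P L) (.vis l) ↔ Offers env P (.vis l) ∧ l ∉ L ∧ l.bar ∉ L :=
  ⟨fun | .hide_vis h hl hl' => ⟨h, hl, hl'⟩, fun ⟨h, hl, hl'⟩ => .hide_vis h hl hl'⟩

@[simp]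
theorem offers_hide_tau :
    Offers env (.hide P L) .tau ↔
      Offers env P .tau ∨ ∃ l : Label, Offers env P (.vis l) ∧ (l ∈ L ∨ l.bar ∈ L) :=
  ⟨fun | .hide_tau h => .inl h | .hide_mem h hl => .inr ⟨_, h, hl⟩,
    fun | .inl h => .hide_tau h | .inr ⟨_, h, hl⟩ => .hide_mem h hl⟩

@[simp]
theorem offers_ident {n : ℕ} : Offers env (.ident n) a ↔ Offers env (env n) a :=
  ⟨fun | .ident h => h, .ident⟩

theorem Offers.visLabel (h : Offers env P (.vis l)) : VisLabel env P l := by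
  generalize hb : Act.vis l = b at h
  induction h with
  | pre => cases hb; exact .pre_act
  | sum_l _ ih => exact .sum_l (ih hb)
  | sum_r _ ih => exact .sum_r (ih hb)
  | par_l _ ih => exact .par_l (ih hb)
  | par_r _ ih => exact .par_r (ih hb)
  | restr_vis _ hl hl' ih => cases hb; exact .restr (ih rfl) hl hl'
  | hide_vis _ hl hl' ih => cases hb; exact .hide (ih rfl) hl hl'
  | ident _ ih => exact .ident (ih hb)
  | par_sync | restr_tau | hide_mem | hide_tau => cases hb

theorem Offers.par_symm (h : Offers env (.par P Q) a) : Offers env (.par Q P) a := by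
  cases h with
  | par_l h => exact .par_r h
  | par_r h => exact .par_l h
  | par_sync h h' => exact .par_sync h' (by rwa [Label.bar_bar])

theorem offers_par_comm : Offers env (.par P Q) a ↔ Offers env (.par Q P) a :=
  ⟨Offers.par_symm, Offers.par_symm⟩

theorem offers_par_assoc :
    Offers env (.par (.par P Q) R) a ↔ Offers env (.par P (.par Q R)) a := by
  cases a with
  | vis l => simp only [offers_par_vis, or_assoc]
  | tau =>
    simp only [offers_par_tau, offers_par_vis, or_and_right, and_or_left, exists_or]
    grind

theorem offers_par_nil : Offers env (.par P .nil) a ↔ Offers env P a := by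
  cases a <;> simp

theorem offers_restr_restr :
    Offers env (.restr (.restr P L) L') a ↔ Offers env (.restr P (L ∪ L')) a := by
  cases a with
  | vis l => simp only [offers_restr_vis, Set.mem_union]; tauto
  | tau => simp only [offers_restr_tau]

theorem offers_hide_hide :
    Offers env (.hide (.hide P L) L') a ↔ Offers env (.hide P (L ∪ L')) a := by
  cases a <;> grind [offers_hide_vis, offers_hide_tau]

theorem not_offers_restr_pre_of_mem (h : l ∈ L ∨ l.bar ∈ L) :
    ¬ Offers env (.restr (.pre l H P) L) a := by
  cases a <;> grind [offers_restr_vis, offers_restr_tau, offers_pre]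

theorem offers_restr_pre_of_notMem (h : l ∉ L) (h' : l.bar ∉ L) :
    Offers env (.restr (.pre l H P) L) a ↔ Offers env (.pre l H (.restr P L)) a := by
  cases a <;> grind [offers_restr_vis, offers_restr_tau, offers_pre]

theorem offers_restr_sum :
    Offers env (.restr (.sum P Q) L) a ↔ Offers env (.sum (.restr P L) (.restr Q L)) a := by
  cases a <;> simp [or_and_right]

theorem offers_restr_of_visLabel_notMem (h : ∀ x, VisLabel env P x → x ∉ L ∧ x.bar ∉ L) :
    Offers env (.restr P L) a ↔ Offers env P a := by
  cases a with
  | vis l => exact offers_restr_vis.trans (and_iff_left_of_imp fun hl => h l hl.visLabel)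
  | tau => exact offers_restr_tau

theorem offers_restr_par (h : ∀ x, VisLabel env P x → VisLabel env Q x.bar → x ∉ L ∧ x.bar ∉ L) :
    Offers env (.restr (.par P Q) L) a ↔ Offers env (.par (.restr P L) (.restr Q L)) a := by
  cases a with
  | vis l => simp [or_and_right]
  | tau =>
    have notMem_of_sync (x : Label) (hP : Offers env P (.vis x)) (hQ : Offers env Q (.vis x.bar)) :
        x ∉ L ∧ x.bar ∉ L := h x hP.visLabel hQ.visLabel
    simp only [offers_restr_tau, offers_par_tau, offers_restr_vis, Label.bar_bar]
    grind

theorem offers_par_congr {P' Q' : Proc} (hP : ∀ a, Offers env P a ↔ Offers env P' a)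
    (hQ : ∀ a, Offers env Q a ↔ Offers env Q' a) :
    Offers env (.par P Q) a ↔ Offers env (.par P' Q') a := by
  cases a <;> simp [hP, hQ]

theorem offers_restr_congr (h : ∀ a, Offers env P a ↔ Offers env Q a) :
    Offers env (.restr P L) a ↔ Offers env (.restr Q L) a := by
  cases a <;> simp [h]

theorem offers_hide_congr (h : ∀ a, Offers env P a ↔ Offers env Q a) :
    Offers env (.hide P L) a ↔ Offers env (.hide Q L) a := by
  cases a <;> simp [h]

theorem SC.offers_iff (h : SC env P Q) (a : Act) : Offers env P a ↔ Offers env Q a := by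
  induction h generalizing a with
  | refl => rfl
  | symm _ ih => exact (ih a).symm
  | trans _ _ ih ih' => exact (ih a).trans (ih' a)
  | pre_congr => simp
  | sum_congr _ _ ih ih' => simp [ih, ih']
  | par_congr _ _ ih ih' => exact offers_par_congr ih ih'
  | restr_congr _ ih => exact offers_restr_congr ih
  | hide_congr _ ih => exact offers_hide_congr ih
  | const => exact offers_ident
  | sum_comm => simp [or_comm]
  | sum_assoc => simp [or_assoc]
  | sum_zero | sum_idem => simp
  | par_comm => exact offers_par_comm
  | par_assoc => exact offers_par_assoc
  | par_zero => exact offers_par_nil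
  | restr_restr => exact offers_restr_restr
  | hide_hide => exact offers_hide_hide
  | restr_nil | hide_nil => cases a <;> simp
  | restr_pre_in h => simp [not_offers_restr_pre_of_mem h]
  | restr_pre_out h h' => exact offers_restr_pre_of_notMem h h'
  | restr_sum => exact offers_restr_sum
  | restr_scope_sum h =>
    rw [offers_restr_sum, offers_sum, offers_sum, offers_restr_of_visLabel_notMem h]
  | restr_scope_par h =>
    exact (offers_restr_par fun x hx _ => h x hx).trans
      (offers_par_congr (fun _ => offers_restr_of_visLabel_notMem h) fun _ => Iff.rfl)
  | restr_par h => exact offers_restr_par h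

end Offers

section Inert

variable {env : ℕ → Proc} {P Q R : Proc} {a : Act} {H : Set Act}

-- The alternative `τ` is needed for a label `ℓ ∉ L` with `ℓ̄ ∈ L` under hiding of `L`.
theorem Step.offers (h : Step env P a H R Q) : Offers env P a ∨ Offers env P .tau := by
  induction h with
  | act => exact .inl .pre
  | struct _ hP _ _ ih => simpa only [hP.offers_iff] using ih
  | sum_l _ ih => exact ih.imp .sum_l .sum_l
  | sum_r _ ih => exact ih.imp .sum_r .sum_r
  | par_l _ _ ih => exact ih.imp .par_l .par_l
  | par_r _ _ ih => exact ih.imp .par_r .par_r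
  | par_sync _ _ ih ih' =>
    right
    rcases ih with hP | hP
    · exact ih'.elim (.par_sync hP) .par_r
    · exact .par_l hP
  | @restr _ a _ _ _ L _ ha ih =>
    cases a with
    | vis l => simpa [ha l rfl] using ih
    | tau => simpa using ih
  | @hide_keep _ a _ _ _ L _ ha ih =>
    cases a with
    | vis l => grind [offers_hide_vis, offers_hide_tau]
    | tau => exact ih.imp .hide_tau .hide_tau
  | hide_tau _ hl ih => exact .inr (ih.elim (.hide_mem · (.inl hl)) .hide_tau)

theorem InitAct.exists_stepA (h : InitAct env P a) : ∃ Q, StepA env P a Q := by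
  induction h with
  | pre => exact ⟨_, _, _, .act⟩
  | sum_l _ ih => obtain ⟨_, _, _, s⟩ := ih; exact ⟨_, _, _, .sum_l s⟩
  | sum_r _ ih => obtain ⟨_, _, _, s⟩ := ih; exact ⟨_, _, _, .sum_r s⟩
  | par_l _ ha ih => obtain ⟨_, _, _, s⟩ := ih; exact ⟨_, _, _, .par_l s ha⟩
  | par_r _ ha ih => obtain ⟨_, _, _, s⟩ := ih; exact ⟨_, _, _, .par_r s ha⟩
  | par_sync _ _ ih ih' =>
    obtain ⟨_, _, _, s⟩ := ih
    obtain ⟨_, _, _, s'⟩ := ih'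
    exact ⟨_, _, _, .par_sync s s'⟩
  | restr _ ha ih => obtain ⟨_, _, _, s⟩ := ih; exact ⟨_, _, _, .restr s ha⟩
  | hide_keep _ ha ih => obtain ⟨_, _, _, s⟩ := ih; exact ⟨_, _, _, .hide_keep s ha⟩
  | hide_tau _ hl ih => obtain ⟨_, _, _, s⟩ := ih; exact ⟨_, _, _, .hide_tau s hl⟩
  | ident _ ih =>
    obtain ⟨_, _, _, s⟩ := ih
    exact ⟨_, _, _, .struct s .const (.refl _) (.refl _)⟩

theorem SC.not_stepA_of_nil (h : SC env P .nil) : ¬ StepA env P a Q := by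
  rintro ⟨H, R, s⟩
  simpa [h.offers_iff] using s.offers

theorem SC.not_potAct_of_nil {l : Label} (h : SC env P .nil) : ¬ PotAct env P l
  | .init hl => h.not_stepA_of_nil hl.exists_stepA.choose_spec
  | .step s _ _ => h.not_stepA_of_nil s

theorem SC.coPot_eq_empty_of_nil (h : SC env P .nil) : coPot env P = ∅ :=
  Set.eq_empty_of_forall_notMem fun _ ⟨_, _, hl⟩ => h.not_potAct_of_nil hl

end Inert

section ClockTransitions

variable {env : ℕ → Proc} {P P₁ P₂ R R₁ R₂ Q : Proc} {a b : Act} {H H₁ H₂ : Set Act}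

theorem Step.context_sc_nil (h : Step env P a H R Q) (ha : a.isClock) : SC env R .nil := by
  induction h with
  | act => exact .refl _
  | struct _ _ _ hR ih => exact hR.trans (ih ha)
  | sum_l _ ih => exact ih ha
  | sum_r _ ih => exact ih ha
  | par_l _ hna => exact absurd ha hna
  | par_r _ hna => exact absurd ha hna
  | @par_sync _ l _ _ _ _ _ _ _ _ _ ih ih' =>
    cases l with
    | clock c => exact .trans (.par_congr (ih trivial) (ih' trivial)) .par_zero
    | name | coname => exact ha.elim
  | restr _ _ ih => exact .trans (.restr_congr (ih ha)) .restr_nil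
  | hide_keep _ _ ih => exact .trans (.hide_congr (ih ha)) .hide_nil
  | hide_tau => exact ha.elim

theorem WEnabled.tau_notMem (h : WEnabled env H R) : Act.tau ∉ H := fun hτ =>
  Set.eq_empty_iff_forall_notMem.mp h _ ⟨hτ, .inr rfl⟩

theorem InterfFree.of_isClock (hb : b.isClock) (hR : SC env R₂ .nil)
    (ha₂ : a ∉ H₂) (hb₁ : b ∉ H₁) : InterfFree env a H₁ R₁ b H₂ R₂ := by
  refine ⟨fun _ => ⟨ha₂, hb₁⟩, ?_, ?_⟩
  · rintro rfl
    exact hb.elim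
  · rintro rfl
    simpa [hR.coPot_eq_empty_of_nil] using ha₂

theorem Coherent.exists_stepA_context (hP : Coherent env P) (hab : a ≠ b)
    (h₁ : Step env P a H₁ R₁ P₁) (h₂ : Step env P b H₂ R₂ P₂) (hb : b.isClock)
    (hfree : InterfFree env a H₁ R₁ b H₂ R₂) : ∃ R', StepA env R₂ a R' := by
  obtain ⟨_, _, _, R', _, _, _, _, _, _, _, hsteps⟩ :=
    hP P .refl _ _ _ _ _ _ _ _ h₁ h₂ (.inl hab) hfree
  exact ⟨R', (hsteps (.inr (.inr hb))).2⟩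

theorem clock_interference_general (hP : Coherent env P) (hab : a ≠ b)
    (h₁ : Step env P a H₁ R₁ P₁) (h₂ : Step env P b H₂ R₂ P₂) (hb : b.isClock) :
    a ∈ H₂ ∨ b ∈ H₁ := by
  by_contra! ⟨ha₂, hb₁⟩
  have hR₂ : SC env R₂ .nil := h₂.context_sc_nil hb
  have hfree : InterfFree env a H₁ R₁ b H₂ R₂ := .of_isClock hb hR₂ ha₂ hb₁
  obtain ⟨R', hR'⟩ := hP.exists_stepA_context hab h₁ h₂ hb hfree
  exact hR₂.not_stepA_of_nil hR'

end ClockTransitions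

/-- Clock interference. -/
theorem clock_interference (env : ℕ → Proc) (P : Proc) (hP : Coherent env P)
    (a : Act) (c : ℕ) (H₁ H₂ : Set Act) (R₁ R₂ P₁ P₂ : Proc)
    (hne : a ≠ Act.vis (Label.clock c))
    (h₁ : Step env P a H₁ R₁ P₁)
    (h₂ : Step env P (Act.vis (Label.clock c)) H₂ R₂ P₂)
    (he₁ : WEnabled env H₁ R₁) (he₂ : WEnabled env H₂ R₂) :
    (a ∈ H₂ ∨ Act.vis (Label.clock c) ∈ H₁) ∧
    (a = Act.tau → Act.vis (Label.clock c) ∈ H₁) := by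
  have blocked := clock_interference_general hP hne h₁ h₂ trivial
  exact ⟨blocked, fun hτ => blocked.resolve_left (hτ ▸ he₂.tau_notMem)⟩

end CCSspt
end

section
/- Action determinism: let P be coherent with a transition P --ℓ:H₁[R₁]--> P₁ for some ℓ ∈ ℒ such that ℓ ∉ iA(R₁). Then for every transition P --ℓ:H₂[R₂]--> P₂ one has P₁ ≡ P₂. In particular, P is structurally clock-deterministic: for every clock σ ∈ 𝒞, if P --σ:H₁[R₁]--> P₁ and P --σ:H₂[R₂]--> P₂ then P₁ ≡ P₂. -/
set_option autoImplicit true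

namespace CCSspt

/-!
If two `l`-steps of `P` lead to non-congruent targets, coherence forces the concurrent context `R₁`
of the first to perform `l` as well. For a clock this is impossible because `R₁ ≡ 0`.

For a channel, a step of `R₁` on `l` gives `l ∈ iA(R₁)` only up to `≡`, which does not preserve
initial actions: the scoping laws are driven by visible labels, and a process under a hiding of
the co-label `l̄` can perform `l` without showing it. So either the `l`-prefix in `R₁` is visible,
which gives `l ∈ iA(R₁)`, or it is concealed. A process `X` showing neither `l` nor `l̄` satisfies
`X ≡ (X | l̄.Y) ∖ {l}` for every `Y`; hence in the concealed case `P₁`, which contains the prefix,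
can silently become `C[Y]` for an arbitrary `Y` without visible labels and a context `C` that lets
`l` through. Choosing `Y` with a branching on `l` that no two further `l`-steps can reconcile, as
witnessed by a blocking set outside the countably many occurring in `C` and the defining
equations, contradicts the coherence of the derivative `C[Y]`.
-/

/-- How a prefix of a process is exposed: `visible` when its label is a visible label of the
process, `mobile` when a hiding operator conceals the label and any restriction can be pushed
inwards past the prefix, `confined` when the label is concealed but only restrictions not mentioning
it can be crossed. -/
inductive Exposure : Type
  | visible
  | confined
  | mobile

/-- The order on exposures generated by `confined ≤ mobile`. -/
inductive Exposure.Le : Exposure → Exposure → Prop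
  | refl (s : Exposure) : Le s s
  | confined_mobile : Le .confined .mobile

theorem Exposure.Le.trans {s₁ s₂ s₃ : Exposure} (h₁ : s₁.Le s₂) (h₂ : s₂.Le s₃) : s₁.Le s₃ := by
  cases h₁ with
  | refl => exact h₂
  | confined_mobile => cases h₂; exact .confined_mobile

theorem Exposure.Le.ne_visible {s s' : Exposure} (h : s.Le s') (hs : s ≠ .visible) :
    s' ≠ .visible := by
  cases h with
  | refl => exact hs
  | confined_mobile => exact nofun

/-- A prefix with label `l` and exposure `s` may cross a restriction to `L`. -/
def Passes (l : Label) (s : Exposure) (L : Set Label) : Prop :=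
  s = .mobile ∨ (l ∉ L ∧ l.bar ∉ L)

theorem Passes.mono {s s' : Exposure} (h : Passes l s L) (le : s.Le s') : Passes l s' L := by
  cases le with
  | refl => exact h
  | confined_mobile => exact .inl rfl

theorem passes_union : Passes l s (L ∪ L') ↔ Passes l s L ∧ Passes l s L' := by
  simp only [Passes, Set.mem_union]
  tauto

/-- Up to structural congruence, `X` shows neither `l` nor its co-label. -/
def Muted (env : ℕ → Proc) (l : Label) (X : Proc) : Prop :=
  ∃ X₀, SC env X X₀ ∧ ¬ VisLabel env X₀ l ∧ ¬ VisLabel env X₀ l.bar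

theorem Muted.sc (h : Muted env l X) (e : SC env X Y) : Muted env l Y := by
  obtain ⟨X₀, e₀, hl, hbar⟩ := h
  exact ⟨X₀, e.symm.trans e₀, hl, hbar⟩

theorem muted_hide_of_bar_mem (h : l.bar ∈ K) : Muted env l (.hide P K) := by
  refine ⟨_, .refl _, fun v => ?_, fun v => ?_⟩
  · cases v with
    | hide _ _ hbar => exact hbar h
  · cases v with
    | hide _ hl _ => exact hl h

/-- `PrefixStep env l H s P Q`: executing one unguarded prefix `l:H` of `P`, of exposure `s`, leads
to `Q`. Unlike `Step`, this follows the shape of the term, does not synchronise clocks and records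
the blocking set as it is written. -/
inductive PrefixStep (env : ℕ → Proc) (l : Label) (H : Set Label) :
    Exposure → Proc → Proc → Prop
  | pre : PrefixStep env l H .visible (.pre l H P) P
  | sum_l : PrefixStep env l H s P P' → PrefixStep env l H s (.sum P Q) P'
  | sum_r : PrefixStep env l H s Q Q' → PrefixStep env l H s (.sum P Q) Q'
  | par_l : PrefixStep env l H s P P' → PrefixStep env l H s (.par P Q) (.par P' Q)
  | par_r : PrefixStep env l H s Q Q' → PrefixStep env l H s (.par P Q) (.par P Q')
  | restr : PrefixStep env l H s P P' → Passes l s L →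
      PrefixStep env l H s (.restr P L) (.restr P' L)
  | hide_visible : PrefixStep env l H .visible P P' → l ∉ K → l.bar ∉ K →
      PrefixStep env l H .visible (.hide P K) (.hide P' K)
  | hide_capture : PrefixStep env l H .visible P P' → l ∉ K → l.bar ∈ K →
      PrefixStep env l H .mobile (.hide P K) (.hide P' K)
  | hide_mobile : PrefixStep env l H s P P' → s ≠ .visible → l ∉ K →
      Muted env l (.hide P K) → PrefixStep env l H .mobile (.hide P K) (.hide P' K)
  | hide_confined : PrefixStep env l H s P P' → s ≠ .visible → l ∉ K →
      PrefixStep env l H .confined (.hide P K) (.hide P' K)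
  | ident : PrefixStep env l H s (env n) P' → PrefixStep env l H s (.ident n) P'

namespace PrefixStep

theorem visLabel_of_target (t : PrefixStep env l H s P P') (hx : VisLabel env P' x) :
    VisLabel env P x := by
  induction t with
  | pre => exact .pre_cont hx
  | sum_l _ ih => exact .sum_l (ih hx)
  | sum_r _ ih => exact .sum_r (ih hx)
  | par_l _ ih =>
    cases hx with
    | par_l hx => exact .par_l (ih hx)
    | par_r hx => exact .par_r hx
  | par_r _ ih =>
    cases hx with
    | par_l hx => exact .par_l hx
    | par_r hx => exact .par_r (ih hx)
  | restr _ _ ih =>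
    cases hx with
    | restr hx h₁ h₂ => exact .restr (ih hx) h₁ h₂
  | hide_visible _ _ _ ih | hide_capture _ _ _ ih | hide_mobile _ _ _ _ ih
  | hide_confined _ _ _ ih =>
    cases hx with
    | hide hx h₁ h₂ => exact .hide (ih hx) h₁ h₂
  | ident _ ih => exact .ident (ih hx)

theorem mobile_of_not_visLabel (t : PrefixStep env l H s P P') (hl : ¬ VisLabel env P l)
    (hbar : ¬ VisLabel env P l.bar) : s.Le .mobile ∧ PrefixStep env l H .mobile P P' := by
  induction t with
  | pre => exact absurd .pre_act hl
  | sum_l _ ih =>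
    obtain ⟨le, t⟩ := ih (hl ∘ .sum_l) (hbar ∘ .sum_l)
    exact ⟨le, .sum_l t⟩
  | sum_r _ ih =>
    obtain ⟨le, t⟩ := ih (hl ∘ .sum_r) (hbar ∘ .sum_r)
    exact ⟨le, .sum_r t⟩
  | par_l _ ih =>
    obtain ⟨le, t⟩ := ih (hl ∘ .par_l) (hbar ∘ .par_l)
    exact ⟨le, .par_l t⟩
  | par_r _ ih =>
    obtain ⟨le, t⟩ := ih (hl ∘ .par_r) (hbar ∘ .par_r)
    exact ⟨le, .par_r t⟩
  | restr t pass ih =>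
    obtain rfl | ⟨h₁, h₂⟩ := pass
    · exact ⟨.refl _, .restr t (.inl rfl)⟩
    · obtain ⟨le, t⟩ := ih (fun v => hl (.restr v h₁ h₂))
        (fun v => hbar (.restr v h₂ (by rwa [Label.bar_bar])))
      exact ⟨le, .restr t (.inl rfl)⟩
  | hide_visible _ h₁ h₂ ih =>
    obtain ⟨le, -⟩ := ih (fun v => hl (.hide v h₁ h₂))
      (fun v => hbar (.hide v h₂ (by rwa [Label.bar_bar])))
    cases le
  | hide_capture t h₁ h₂ => exact ⟨.refl _, .hide_capture t h₁ h₂⟩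
  | hide_mobile t hs h₁ hm => exact ⟨.refl _, .hide_mobile t hs h₁ hm⟩
  | hide_confined t hs h₁ => exact ⟨.confined_mobile, .hide_mobile t hs h₁ ⟨_, .refl _, hl, hbar⟩⟩
  | ident _ ih =>
    obtain ⟨le, t⟩ := ih (hl ∘ .ident) (hbar ∘ .ident)
    exact ⟨le, .ident t⟩

theorem exists_hide (t : PrefixStep env l H s P P') (h : l ∉ K) :
    ∃ s', PrefixStep env l H s' (.hide P K) (.hide P' K) := by
  by_cases hs : s = .visible
  · subst hs
    by_cases hbar : l.bar ∈ K
    · exact ⟨_, .hide_capture t h hbar⟩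
    · exact ⟨_, .hide_visible t h hbar⟩
  · exact ⟨_, .hide_confined t hs h⟩

theorem exists_of_hide (t : PrefixStep env l H s (.hide P K) Z) :
    ∃ s' P', PrefixStep env l H s' P P' ∧ l ∉ K ∧ Z = .hide P' K := by
  cases t with
  | hide_visible t h | hide_capture t h | hide_mobile t _ h | hide_confined t _ h =>
    exact ⟨_, _, t, h, rfl⟩

end PrefixStep

/-- `Q` matches every prefix step of `P` with the same label and blocking set, an exposure that is
at least as large, and a congruent target. -/
def PrefixSim (env : ℕ → Proc) (P Q : Proc) : Prop :=
  ∀ ⦃l H s P'⦄, PrefixStep env l H s P P' →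
    ∃ s' Q', s.Le s' ∧ PrefixStep env l H s' Q Q' ∧ SC env P' Q'

namespace PrefixSim

theorem of_forall (h : ∀ l H s P', PrefixStep env l H s P P' →
    ∃ Q', PrefixStep env l H s Q Q' ∧ SC env P' Q') : PrefixSim env P Q := by
  intro l H s P' t
  obtain ⟨Q', u, e⟩ := h l H s P' t
  exact ⟨s, Q', .refl s, u, e⟩

theorem refl (P : Proc) : PrefixSim env P P :=
  of_forall fun _ _ _ _ t => ⟨_, t, .refl _⟩

theorem trans (h₁ : PrefixSim env P Q) (h₂ : PrefixSim env Q R) : PrefixSim env P R := by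
  intro l H s P' t
  obtain ⟨s₁, Q', le₁, u, e₁⟩ := h₁ t
  obtain ⟨s₂, R', le₂, v, e₂⟩ := h₂ u
  exact ⟨s₂, R', le₁.trans le₂, v, e₁.trans e₂⟩

theorem nil : PrefixSim env .nil P := nofun

theorem pre (e : SC env P Q) : PrefixSim env (.pre l H P) (.pre l H Q) :=
  of_forall fun
    | _, _, _, _, .pre => ⟨_, .pre, e⟩

theorem sum (hP : PrefixSim env P P') (hQ : PrefixSim env Q Q') :
    PrefixSim env (.sum P Q) (.sum P' Q') := by
  intro l H s X t
  cases t with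
  | sum_l t =>
    obtain ⟨s', X', le, u, e⟩ := hP t
    exact ⟨s', X', le, .sum_l u, e⟩
  | sum_r t =>
    obtain ⟨s', X', le, u, e⟩ := hQ t
    exact ⟨s', X', le, .sum_r u, e⟩

theorem par (eP : SC env P P') (hP : PrefixSim env P P') (eQ : SC env Q Q')
    (hQ : PrefixSim env Q Q') : PrefixSim env (.par P Q) (.par P' Q') := by
  intro l H s X t
  cases t with
  | par_l t =>
    obtain ⟨s', X', le, u, e⟩ := hP t
    exact ⟨s', _, le, .par_l u, .par_congr e eQ⟩
  | par_r t =>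
    obtain ⟨s', X', le, u, e⟩ := hQ t
    exact ⟨s', _, le, .par_r u, .par_congr eP e⟩

theorem restr (h : PrefixSim env P Q) : PrefixSim env (.restr P L) (.restr Q L) := by
  intro l H s X t
  cases t with
  | restr t pass =>
    obtain ⟨s', X', le, u, e⟩ := h t
    exact ⟨s', _, le, .restr u (pass.mono le), .restr_congr e⟩

theorem hide (e : SC env P Q) (h : PrefixSim env P Q) :
    PrefixSim env (.hide P K) (.hide Q K) := by
  intro l H s X t
  cases t with
  | hide_visible t hl hbar =>
    obtain ⟨s', X', ⟨⟩, u, e'⟩ := h t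
    exact ⟨_, _, .refl _, .hide_visible u hl hbar, .hide_congr e'⟩
  | hide_capture t hl hbar =>
    obtain ⟨s', X', ⟨⟩, u, e'⟩ := h t
    exact ⟨_, _, .refl _, .hide_capture u hl hbar, .hide_congr e'⟩
  | hide_mobile t hs hl hm =>
    obtain ⟨s', X', le, u, e'⟩ := h t
    exact ⟨_, _, .refl _, .hide_mobile u (le.ne_visible hs) hl (hm.sc (.hide_congr e)),
      .hide_congr e'⟩
  | hide_confined t hs hl =>
    obtain ⟨s', X', le, u, e'⟩ := h t
    exact ⟨_, _, .refl _, .hide_confined u (le.ne_visible hs) hl, .hide_congr e'⟩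

theorem ident : PrefixSim env (.ident n) (env n) :=
  of_forall fun
    | _, _, _, _, .ident t => ⟨_, t, .refl _⟩

theorem to_ident : PrefixSim env (env n) (.ident n) :=
  of_forall fun _ _ _ _ t => ⟨_, .ident t, .refl _⟩

theorem sum_comm : PrefixSim env (.sum P Q) (.sum Q P) :=
  of_forall fun
    | _, _, _, _, .sum_l t => ⟨_, .sum_r t, .refl _⟩
    | _, _, _, _, .sum_r t => ⟨_, .sum_l t, .refl _⟩

theorem sum_assoc : PrefixSim env (.sum (.sum P Q) R) (.sum P (.sum Q R)) :=
  of_forall fun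
    | _, _, _, _, .sum_l (.sum_l t) => ⟨_, .sum_l t, .refl _⟩
    | _, _, _, _, .sum_l (.sum_r t) => ⟨_, .sum_r (.sum_l t), .refl _⟩
    | _, _, _, _, .sum_r t => ⟨_, .sum_r (.sum_r t), .refl _⟩

theorem sum_assoc_symm : PrefixSim env (.sum P (.sum Q R)) (.sum (.sum P Q) R) :=
  of_forall fun
    | _, _, _, _, .sum_l t => ⟨_, .sum_l (.sum_l t), .refl _⟩
    | _, _, _, _, .sum_r (.sum_l t) => ⟨_, .sum_l (.sum_r t), .refl _⟩
    | _, _, _, _, .sum_r (.sum_r t) => ⟨_, .sum_r t, .refl _⟩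

theorem sum_elim (hP : PrefixSim env P R) (hQ : PrefixSim env Q R) :
    PrefixSim env (.sum P Q) R := fun
  | _, _, _, _, .sum_l t => hP t
  | _, _, _, _, .sum_r t => hQ t

theorem to_sum_left : PrefixSim env P (.sum P Q) :=
  of_forall fun _ _ _ _ t => ⟨_, .sum_l t, .refl _⟩

theorem par_comm : PrefixSim env (.par P Q) (.par Q P) :=
  of_forall fun
    | _, _, _, _, .par_l t => ⟨_, .par_r t, .par_comm⟩
    | _, _, _, _, .par_r t => ⟨_, .par_l t, .par_comm⟩

theorem par_assoc : PrefixSim env (.par (.par P Q) R) (.par P (.par Q R)) :=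
  of_forall fun
    | _, _, _, _, .par_l (.par_l t) => ⟨_, .par_l t, .par_assoc⟩
    | _, _, _, _, .par_l (.par_r t) => ⟨_, .par_r (.par_l t), .par_assoc⟩
    | _, _, _, _, .par_r t => ⟨_, .par_r (.par_r t), .par_assoc⟩

theorem par_assoc_symm : PrefixSim env (.par P (.par Q R)) (.par (.par P Q) R) :=
  of_forall fun
    | _, _, _, _, .par_l t => ⟨_, .par_l (.par_l t), .symm .par_assoc⟩
    | _, _, _, _, .par_r (.par_l t) => ⟨_, .par_l (.par_r t), .symm .par_assoc⟩
    | _, _, _, _, .par_r (.par_r t) => ⟨_, .par_r t, .symm .par_assoc⟩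

theorem par_nil : PrefixSim env (.par P .nil) P :=
  of_forall fun
    | _, _, _, _, .par_l t => ⟨_, t, .par_zero⟩

theorem to_par_nil : PrefixSim env P (.par P .nil) :=
  of_forall fun _ _ _ _ t => ⟨_, .par_l t, .symm .par_zero⟩

theorem restr_restr : PrefixSim env (.restr (.restr P L) L') (.restr P (L ∪ L')) :=
  of_forall fun
    | _, _, _, _, .restr (.restr t h) h' => ⟨_, .restr t (passes_union.2 ⟨h, h'⟩), .restr_restr⟩

theorem restr_union : PrefixSim env (.restr P (L ∪ L')) (.restr (.restr P L) L') :=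
  of_forall fun
    | _, _, _, _, .restr t h =>
      ⟨_, .restr (.restr t (passes_union.1 h).1) (passes_union.1 h).2, .symm .restr_restr⟩

theorem restr_nil : PrefixSim env (.restr .nil L) P := fun
  | _, _, _, _, .restr t _ => nomatch t

theorem hide_nil : PrefixSim env (.hide .nil K) P := by
  intro l H s X t
  obtain ⟨_, _, ⟨⟩, _⟩ := t.exists_of_hide

theorem restr_pre_of_mem (h : l ∈ L ∨ l.bar ∈ L) : PrefixSim env (.restr (.pre l H P) L) Q := by
  rintro _ _ _ _ (_ | _ | _ | _ | _ | ⟨⟨⟩, pass⟩)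
  obtain ⟨⟨⟩⟩ | ⟨hl, hbar⟩ := pass
  exact absurd h (not_or.2 ⟨hl, hbar⟩)

theorem restr_pre : PrefixSim env (.restr (.pre l H P) L) (.pre l H (.restr P L)) :=
  of_forall fun
    | _, _, _, _, .restr .pre _ => ⟨_, .pre, .refl _⟩

theorem pre_restr (hl : l ∉ L) (hbar : l.bar ∉ L) :
    PrefixSim env (.pre l H (.restr P L)) (.restr (.pre l H P) L) :=
  of_forall fun
    | _, _, _, _, .pre => ⟨_, .restr .pre (.inr ⟨hl, hbar⟩), .refl _⟩

theorem restr_sum : PrefixSim env (.restr (.sum P Q) L) (.sum (.restr P L) (.restr Q L)) :=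
  of_forall fun
    | _, _, _, _, .restr (.sum_l t) h => ⟨_, .sum_l (.restr t h), .refl _⟩
    | _, _, _, _, .restr (.sum_r t) h => ⟨_, .sum_r (.restr t h), .refl _⟩

theorem sum_restr : PrefixSim env (.sum (.restr P L) (.restr Q L)) (.restr (.sum P Q) L) :=
  of_forall fun
    | _, _, _, _, .sum_l (.restr t h) => ⟨_, .restr (.sum_l t) h, .refl _⟩
    | _, _, _, _, .sum_r (.restr t h) => ⟨_, .restr (.sum_r t) h, .refl _⟩

end PrefixSim

/-- No visible label of `P` is touched by a restriction to `L`. -/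
def RestrFree (env : ℕ → Proc) (P : Proc) (L : Set Label) : Prop :=
  ∀ x, VisLabel env P x → x ∉ L ∧ x.bar ∉ L

theorem RestrFree.of_step (h : RestrFree env P L) (t : PrefixStep env l H s P P') :
    RestrFree env P' L :=
  fun x hx => h x (t.visLabel_of_target hx)

theorem SC.restr_of_restrFree (h : RestrFree env P L) : SC env (.restr P L) P :=
  (SC.restr_congr (.symm .par_zero)).trans <| (SC.restr_scope_par h).trans <|
    (SC.par_congr (.refl _) .restr_nil).trans .par_zero

namespace PrefixSim

theorem restr_of_restrFree (h : RestrFree env P L) : PrefixSim env (.restr P L) P :=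
  of_forall fun
    | _, _, _, _, .restr t _ => ⟨_, t, .restr_of_restrFree (h.of_step t)⟩

theorem to_restr_of_restrFree (h : RestrFree env P L) : PrefixSim env P (.restr P L) := by
  intro l H s P' t
  have e : SC env P' (.restr P' L) := (SC.restr_of_restrFree (h.of_step t)).symm
  by_cases hL : l ∉ L ∧ l.bar ∉ L
  · exact ⟨s, _, .refl s, .restr t (.inr hL), e⟩
  · obtain ⟨le, u⟩ := t.mobile_of_not_visLabel (fun v => hL (h l v))
      (fun v => hL (by simpa [and_comm] using h l.bar v))
    exact ⟨_, _, le, .restr u (.inl rfl), e⟩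

theorem restr_par (h : ∀ x, VisLabel env P x → VisLabel env Q x.bar → x ∉ L ∧ x.bar ∉ L) :
    PrefixSim env (.restr (.par P Q) L) (.par (.restr P L) (.restr Q L)) :=
  of_forall fun
    | _, _, _, _, .restr (.par_l t) pass => ⟨_, .par_l (.restr t pass),
        .restr_par fun x hP hQ => h x (t.visLabel_of_target hP) hQ⟩
    | _, _, _, _, .restr (.par_r t) pass => ⟨_, .par_r (.restr t pass),
        .restr_par fun x hP hQ => h x hP (t.visLabel_of_target hQ)⟩

theorem par_restr (h : ∀ x, VisLabel env P x → VisLabel env Q x.bar → x ∉ L ∧ x.bar ∉ L) :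
    PrefixSim env (.par (.restr P L) (.restr Q L)) (.restr (.par P Q) L) :=
  of_forall fun
    | _, _, _, _, .par_l (.restr t pass) => ⟨_, .restr (.par_l t) pass,
        .symm (.restr_par fun x hP hQ => h x (t.visLabel_of_target hP) hQ)⟩
    | _, _, _, _, .par_r (.restr t pass) => ⟨_, .restr (.par_r t) pass,
        .symm (.restr_par fun x hP hQ => h x hP (t.visLabel_of_target hQ))⟩

theorem hide_hide : PrefixSim env (.hide (.hide P K) L) (.hide P (K ∪ L)) := by
  intro l H s X t
  cases t with
  | hide_visible t hl hbar =>
    cases t with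
    | hide_visible t hl' hbar' =>
      exact ⟨_, _, .refl _, .hide_visible t (by simp [*]) (by simp [*]), .hide_hide⟩
  | hide_capture t hl hbar =>
    cases t with
    | hide_visible t hl' hbar' =>
      exact ⟨_, _, .refl _, .hide_capture t (by simp [*]) (by simp [*]), .hide_hide⟩
  | hide_mobile t hs hl hm =>
    cases t with
    | hide_visible => exact absurd rfl hs
    | hide_capture t hl' hbar' =>
      exact ⟨_, _, .refl _, .hide_capture t (by simp [*]) (by simp [*]), .hide_hide⟩
    | hide_mobile t hs' hl' | hide_confined t hs' hl' =>
      exact ⟨_, _, .refl _, .hide_mobile t hs' (by simp [*]) (hm.sc .hide_hide), .hide_hide⟩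
  | hide_confined t hs hl =>
    cases t with
    | hide_visible => exact absurd rfl hs
    | hide_capture t hl' hbar' =>
      exact ⟨_, _, .confined_mobile, .hide_capture t (by simp [*]) (by simp [*]), .hide_hide⟩
    | hide_mobile t hs' hl' | hide_confined t hs' hl' =>
      exact ⟨_, _, .refl _, .hide_confined t hs' (by simp [*]), .hide_hide⟩

theorem hide_union : PrefixSim env (.hide P (K ∪ L)) (.hide (.hide P K) L) := by
  refine of_forall fun l H s X t => ?_
  cases t with
  | hide_visible t hl hbar =>
    obtain ⟨hK, hL⟩ := not_or.1 hl
    obtain ⟨hK', hL'⟩ := not_or.1 hbar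
    exact ⟨_, .hide_visible (.hide_visible t hK hK') hL hL', .symm .hide_hide⟩
  | hide_capture t hl hbar =>
    obtain ⟨hK, hL⟩ := not_or.1 hl
    by_cases hK' : l.bar ∈ K
    · exact ⟨_, .hide_mobile (.hide_capture t hK hK') nofun hL
        ((muted_hide_of_bar_mem hbar).sc (.symm .hide_hide)), .symm .hide_hide⟩
    · exact ⟨_, .hide_capture (.hide_visible t hK hK') hL (hbar.resolve_left hK'),
        .symm .hide_hide⟩
  | hide_mobile t hs hl hm =>
    obtain ⟨hK, hL⟩ := not_or.1 hl
    exact ⟨_, .hide_mobile (.hide_confined t hs hK) nofun hL (hm.sc (.symm .hide_hide)),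
      .symm .hide_hide⟩
  | hide_confined t hs hl =>
    obtain ⟨hK, hL⟩ := not_or.1 hl
    exact ⟨_, .hide_confined (.hide_confined t hs hK) nofun hL, .symm .hide_hide⟩

end PrefixSim

theorem SC.prefixSim (e : SC env P Q) : PrefixSim env P Q ∧ PrefixSim env Q P := by
  induction e with
  | refl P => exact ⟨.refl P, .refl P⟩
  | symm _ ih => exact ih.symm
  | trans _ _ ih₁ ih₂ => exact ⟨ih₁.1.trans ih₂.1, ih₂.2.trans ih₁.2⟩
  | pre_congr e => exact ⟨.pre e, .pre e.symm⟩
  | sum_congr _ _ ihP ihQ => exact ⟨.sum ihP.1 ihQ.1, .sum ihP.2 ihQ.2⟩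
  | par_congr eP eQ ihP ihQ => exact ⟨.par eP ihP.1 eQ ihQ.1, .par eP.symm ihP.2 eQ.symm ihQ.2⟩
  | restr_congr _ ih => exact ⟨ih.1.restr, ih.2.restr⟩
  | hide_congr e ih => exact ⟨.hide e ih.1, .hide e.symm ih.2⟩
  | const => exact ⟨.ident, .to_ident⟩
  | sum_comm => exact ⟨.sum_comm, .sum_comm⟩
  | sum_assoc => exact ⟨.sum_assoc, .sum_assoc_symm⟩
  | sum_zero => exact ⟨.sum_elim (.refl _) .nil, .to_sum_left⟩
  | sum_idem => exact ⟨.sum_elim (.refl _) (.refl _), .to_sum_left⟩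
  | par_comm => exact ⟨.par_comm, .par_comm⟩
  | par_assoc => exact ⟨.par_assoc, .par_assoc_symm⟩
  | par_zero => exact ⟨.par_nil, .to_par_nil⟩
  | restr_restr => exact ⟨.restr_restr, .restr_union⟩
  | hide_hide => exact ⟨.hide_hide, .hide_union⟩
  | restr_nil => exact ⟨.restr_nil, .nil⟩
  | hide_nil => exact ⟨.hide_nil, .nil⟩
  | restr_pre_in h => exact ⟨.restr_pre_of_mem h, .nil⟩
  | restr_pre_out hl hbar => exact ⟨.restr_pre, .pre_restr hl hbar⟩
  | restr_sum => exact ⟨.restr_sum, .sum_restr⟩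
  | restr_scope_sum h =>
    exact ⟨.trans .restr_sum (.sum (.restr_of_restrFree h) (.refl _)),
      .trans (.sum (.to_restr_of_restrFree h) (.refl _)) .sum_restr⟩
  | restr_scope_par h =>
    have e := SC.restr_of_restrFree h
    exact ⟨.trans (.restr_par fun x hP _ => h x hP)
        (.par e (.restr_of_restrFree h) (.refl _) (.refl _)),
      .trans (.par e.symm (.to_restr_of_restrFree h) (.refl _) (.refl _))
        (.par_restr fun x hP _ => h x hP)⟩
  | restr_par h => exact ⟨.restr_par h, .par_restr h⟩

theorem PrefixStep.sc (t : PrefixStep env l H s P P') (e : SC env P Q) :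
    ∃ s' Q', s.Le s' ∧ PrefixStep env l H s' Q Q' ∧ SC env P' Q' :=
  e.prefixSim.1 t

theorem Label.isChan.not_isClock {l : Label} (hl : l.isChan) : ¬ (Act.vis l).isClock := by
  cases l <;> simp_all [Label.isChan, Act.isClock, Label.isClock]

theorem Label.isChan.sync_eq_tau {l : Label} (hl : l.isChan) : l.sync = .tau := by
  cases l <;> simp_all [Label.isChan, Label.sync]

theorem Label.isChan.bar_ne {l : Label} (hl : l.isChan) : l.bar ≠ l := by
  cases l <;> simp_all [Label.isChan, Label.bar]

theorem Label.eq_clock_of_sync_eq_vis {l k : Label} (h : k.sync = .vis l) :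
    ∃ c, l = .clock c ∧ k = .clock c := by
  cases k <;> cases h
  exact ⟨_, rfl, rfl⟩

-- Only channel labels determine the target: a clock step executes several prefixes at once.
theorem Step.exists_prefixStep (st : Step env P (.vis l) H R P') :
    ∃ H' s P'', PrefixStep env l H' s P P'' ∧ (l.isChan → SC env P' P'') := by
  generalize ha : Act.vis l = a at st
  induction st with
  | act => cases ha; exact ⟨_, _, _, .pre, fun _ => .refl _⟩
  | struct _ eP eP' _ ih =>
    obtain ⟨H', s, P'', t, e⟩ := ih ha
    obtain ⟨s', Q, -, u, e'⟩ := t.sc eP.symm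
    exact ⟨H', s', Q, u, fun hl => eP'.trans ((e hl).trans e')⟩
  | sum_l _ ih =>
    obtain ⟨H', s, P'', t, e⟩ := ih ha
    exact ⟨H', s, P'', .sum_l t, e⟩
  | sum_r _ ih =>
    obtain ⟨H', s, P'', t, e⟩ := ih ha
    exact ⟨H', s, P'', .sum_r t, e⟩
  | par_l _ _ ih =>
    obtain ⟨H', s, P'', t, e⟩ := ih ha
    exact ⟨H', s, _, .par_l t, fun hl => .par_congr (e hl) (.refl _)⟩
  | par_r _ _ ih =>
    obtain ⟨H', s, P'', t, e⟩ := ih ha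
    exact ⟨H', s, _, .par_r t, fun hl => .par_congr (.refl _) (e hl)⟩
  | par_sync _ _ ih =>
    obtain ⟨c, rfl, rfl⟩ := Label.eq_clock_of_sync_eq_vis ha.symm
    obtain ⟨H', s, P'', t, -⟩ := ih rfl
    exact ⟨H', s, _, .par_l t, False.elim⟩
  | restr _ hL ih =>
    obtain ⟨H', s, P'', t, e⟩ := ih ha
    exact ⟨H', s, _, .restr t (.inr (hL l ha.symm)), fun hl => .restr_congr (e hl)⟩
  | hide_keep _ hK ih =>
    obtain ⟨H', s, P'', t, e⟩ := ih ha
    obtain ⟨s', u⟩ := t.exists_hide (hK l ha.symm)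
    exact ⟨H', s', _, u, fun hl => .hide_congr (e hl)⟩
  | hide_tau => cases ha

theorem Step.context_sc_nil_of_clock (st : Step env P (.vis (.clock c)) H R P') :
    SC env R .nil := by
  generalize ha : Act.vis (.clock c) = a at st
  induction st with
  | act => exact .refl _
  | struct _ _ _ eR ih => exact eR.trans (ih ha)
  | sum_l _ ih => exact ih ha
  | sum_r _ ih => exact ih ha
  | par_l _ ha' => exact absurd (ha ▸ trivial) ha'
  | par_r _ ha' => exact absurd (ha ▸ trivial) ha'
  | par_sync _ _ ih₁ ih₂ =>
    obtain ⟨c, ⟨⟩, rfl⟩ := Label.eq_clock_of_sync_eq_vis ha.symm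
    exact (SC.par_congr (ih₁ rfl) (ih₂ rfl)).trans .par_zero
  | restr _ _ ih => exact (SC.restr_congr (ih ha)).trans .restr_nil
  | hide_keep _ _ ih => exact (SC.hide_congr (ih ha)).trans .hide_nil
  | hide_tau => cases ha

namespace StepA

theorem sc (h : StepA env P a Q) (eP : SC env P' P) (eQ : SC env Q' Q) : StepA env P' a Q' := by
  obtain ⟨H, R, st⟩ := h
  exact ⟨H, R, .struct st eP eQ (.refl R)⟩

theorem not_of_sc_nil (e : SC env P .nil) : ¬ StepA env P (.vis l) Q := by
  intro h
  obtain ⟨_, _, st⟩ := h.sc e.symm (.refl Q)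
  obtain ⟨_, _, _, ⟨⟩, _⟩ := st.exists_prefixStep

theorem sum_left (h : StepA env P a P') : StepA env (.sum P Q) a P' := by
  obtain ⟨_, _, st⟩ := h
  exact ⟨_, _, .sum_l st⟩

theorem par_left (h : StepA env P a P') (ha : ¬ a.isClock) :
    StepA env (.par P Q) a (.par P' Q) := by
  obtain ⟨_, _, st⟩ := h
  exact ⟨_, _, .par_l st ha⟩

theorem par_right (h : StepA env Q a Q') (ha : ¬ a.isClock) :
    StepA env (.par P Q) a (.par P Q') :=
  (h.par_left ha).sc .par_comm .par_comm

theorem restr (h : StepA env P a P') (ha : ∀ l : Label, a = .vis l → l ∉ L ∧ l.bar ∉ L) :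
    StepA env (.restr P L) a (.restr P' L) := by
  obtain ⟨_, _, st⟩ := h
  exact ⟨_, _, .restr st ha⟩

theorem hide (h : StepA env P a P') (ha : ∀ l : Label, a = .vis l → l ∉ K) :
    StepA env (.hide P K) a (.hide P' K) := by
  obtain ⟨_, _, st⟩ := h
  exact ⟨_, _, .hide_keep st ha⟩

end StepA

theorem PrefixStep.initAct (t : PrefixStep env l H .visible P P') (hl : l.isChan) :
    InitAct env P (.vis l) := by
  generalize hs : Exposure.visible = s at t
  induction t with
  | pre => exact .pre
  | sum_l _ ih => exact .sum_l (ih hs)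
  | sum_r _ ih => exact .sum_r (ih hs)
  | par_l _ ih => exact .par_l (ih hs) hl.not_isClock
  | par_r _ ih => exact .par_r (ih hs) hl.not_isClock
  | restr _ pass ih =>
    subst hs
    exact .restr (ih rfl) (by rintro _ ⟨⟩; exact pass.resolve_left nofun)
  | hide_visible _ h _ ih => exact .hide_keep (ih rfl) (by rintro _ ⟨⟩; exact h)
  | hide_capture => cases hs
  | hide_mobile => cases hs
  | hide_confined => cases hs
  | ident _ ih => exact .ident (ih hs)

/-- One-hole contexts that let an `l`-step of the process in their hole through. -/
inductive TransparentCtx (l : Label) : (Proc → Proc) → Prop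
  | id : TransparentCtx l (fun X => X)
  | par_l : TransparentCtx l C → TransparentCtx l (fun X => .par (C X) D)
  | par_r : TransparentCtx l C → TransparentCtx l (fun X => .par D (C X))
  | restr : TransparentCtx l C → l ∉ L → l.bar ∉ L → TransparentCtx l (fun X => .restr (C X) L)
  | hide : TransparentCtx l C → l ∉ K → TransparentCtx l (fun X => .hide (C X) K)

theorem TransparentCtx.stepA (hC : TransparentCtx l C) (hl : l.isChan)
    (h : StepA env X (.vis l) X') : StepA env (C X) (.vis l) (C X') := by
  induction hC with
  | id => exact h
  | par_l _ ih => exact ih.par_left hl.not_isClock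
  | par_r _ ih => exact ih.par_right hl.not_isClock
  | restr _ h₁ h₂ ih => exact ih.restr (by rintro _ ⟨⟩; exact ⟨h₁, h₂⟩)
  | hide _ h ih => exact ih.hide (by rintro _ ⟨⟩; exact h)

theorem Step.exists_transparentCtx (hl : l.isChan) (st : Step env P (.vis l) H R P') :
    ∃ C X, TransparentCtx l C ∧ SC env R (C .nil) ∧ SC env P' (C X) := by
  generalize ha : Act.vis l = a at st
  induction st with
  | act => exact ⟨_, _, .id, .refl _, .refl _⟩
  | struct _ _ eP' eR ih =>
    obtain ⟨C, X, hC, e, e'⟩ := ih ha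
    exact ⟨C, X, hC, eR.trans e, eP'.trans e'⟩
  | sum_l _ ih => exact ih ha
  | sum_r _ ih => exact ih ha
  | par_l _ _ ih =>
    obtain ⟨C, X, hC, e, e'⟩ := ih ha
    exact ⟨_, X, hC.par_l, .par_congr e (.refl _), .par_congr e' (.refl _)⟩
  | par_r _ _ ih =>
    obtain ⟨C, X, hC, e, e'⟩ := ih ha
    exact ⟨_, X, hC.par_r, .par_congr (.refl _) e, .par_congr (.refl _) e'⟩
  | par_sync =>
    obtain ⟨c, rfl, -⟩ := Label.eq_clock_of_sync_eq_vis ha.symm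
    exact hl.elim
  | restr _ hL ih =>
    obtain ⟨C, X, hC, e, e'⟩ := ih ha
    obtain ⟨h₁, h₂⟩ := hL l ha.symm
    exact ⟨_, X, hC.restr h₁ h₂, .restr_congr e, .restr_congr e'⟩
  | hide_keep _ hK ih =>
    obtain ⟨C, X, hC, e, e'⟩ := ih ha
    exact ⟨_, X, hC.hide (hK l ha.symm), .hide_congr e, .hide_congr e'⟩
  | hide_tau => cases ha

-- An unguarded prefix of `C[0]` belongs to the context, so it survives filling the hole; only the
-- witness that it is `mobile` may be lost.
theorem TransparentCtx.prefixStep_of_nil (hC : TransparentCtx l C)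
    (t : PrefixStep env l H s (C .nil) Z) :
    ∃ s' Z', PrefixStep env l H s' (C X) Z' ∧ (s' = .visible ↔ s = .visible) := by
  induction hC generalizing s Z with
  | id => cases t
  | par_l _ ih =>
    cases t with
    | par_l t =>
      obtain ⟨s', Z', u, hs⟩ := ih t
      exact ⟨s', _, .par_l u, hs⟩
    | par_r t => exact ⟨s, _, .par_r t, .rfl⟩
  | par_r _ ih =>
    cases t with
    | par_l t => exact ⟨s, _, .par_l t, .rfl⟩
    | par_r t =>
      obtain ⟨s', Z', u, hs⟩ := ih t
      exact ⟨s', _, .par_r u, hs⟩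
  | restr _ h₁ h₂ ih =>
    cases t with
    | restr t =>
      obtain ⟨s', Z', u, hs⟩ := ih t
      exact ⟨s', _, .restr u (.inr ⟨h₁, h₂⟩), hs⟩
  | hide _ hK ih =>
    cases t with
    | hide_visible t _ hbar =>
      obtain ⟨s', Z', u, hs⟩ := ih t
      obtain rfl := hs.2 rfl
      exact ⟨_, _, .hide_visible u hK hbar, .rfl⟩
    | hide_capture t _ hbar =>
      obtain ⟨s', Z', u, hs⟩ := ih t
      obtain rfl := hs.2 rfl
      exact ⟨_, _, .hide_capture u hK hbar, .rfl⟩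
    | hide_mobile t h | hide_confined t h =>
      obtain ⟨s', Z', u, hs⟩ := ih t
      exact ⟨_, _, .hide_confined u (mt hs.1 h) hK, by simp⟩

/-- A `τ`-step, as a binary relation. -/
abbrev TauStep (env : ℕ → Proc) (P Q : Proc) : Prop := StepA env P .tau Q

/-- One or more `τ`-steps. At least one step is required so that both ends may be replaced by
congruent processes. -/
abbrev SilentSteps (env : ℕ → Proc) : Proc → Proc → Prop :=
  Relation.TransGen (TauStep env)

namespace SilentSteps

theorem sc_left (h : SilentSteps env P Q) (e : SC env P' P) : SilentSteps env P' Q := by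
  obtain ⟨P₁, st, rest⟩ := Relation.TransGen.head'_iff.1 h
  exact .head' (st.sc e (.refl _)) rest

theorem sc_right (h : SilentSteps env P Q) (e : SC env Q' Q) : SilentSteps env P Q' := by
  obtain ⟨Q₁, steps, st⟩ := Relation.TransGen.tail'_iff.1 h
  exact .tail' steps (st.sc (.refl _) e)

theorem sum_left (h : SilentSteps env P Q) : SilentSteps env (.sum P R) Q := by
  obtain ⟨P₁, st, rest⟩ := Relation.TransGen.head'_iff.1 h
  exact .head' st.sum_left rest

theorem par_left (h : SilentSteps env P Q) : SilentSteps env (.par P R) (.par Q R) :=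
  h.lift (p := TauStep env) (Proc.par · R) (fun _ _ st => st.par_left id) _ _

theorem restr (h : SilentSteps env P Q) : SilentSteps env (.restr P L) (.restr Q L) :=
  h.lift (p := TauStep env) (Proc.restr · L) (fun _ _ st => st.restr nofun) _ _

theorem hide (h : SilentSteps env P Q) : SilentSteps env (.hide P K) (.hide Q K) :=
  h.lift (p := TauStep env) (Proc.hide · K) (fun _ _ st => st.hide nofun) _ _

end SilentSteps

/-- `Y` has no visible labels. -/
def Invisible (env : ℕ → Proc) (Y : Proc) : Prop := ∀ x, ¬ VisLabel env Y x

theorem Invisible.restrFree (h : Invisible env Y) : RestrFree env Y L :=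
  fun x v => absurd v (h x)

/-- `P` with all labels but `l` hidden. For a channel `l` this leaves no visible label, since the
co-label of `l` is hidden, although `l`-steps remain possible. -/
abbrev Proc.veil (l : Label) (P : Proc) : Proc := .hide P {l}ᶜ

theorem Label.isChan.invisible_veil {l : Label} {P : Proc} (hl : l.isChan) :
    Invisible env (P.veil l) := by
  rintro x (_ | _ | _ | _ | _ | _ | _ | _ | ⟨_, hx, hbar⟩)
  obtain rfl : x = l := by simpa using hx
  exact hbar hl.bar_ne

theorem StepA.veil (h : StepA env P (.vis l) P') : StepA env (P.veil l) (.vis l) (P'.veil l) :=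
  h.hide (by rintro _ ⟨⟩; simp)

theorem stepA_pre : StepA env (.pre l H P) (.vis l) P := ⟨_, _, .act⟩

/-- `P` can silently turn into the context `C` filled with any invisible process. -/
def EscapesTo (env : ℕ → Proc) (P : Proc) (C : Proc → Proc) : Prop :=
  ∀ Y, Invisible env Y → SilentSteps env P (C Y)

theorem EscapesTo.restr_par (h : EscapesTo env P (.par · D)) :
    EscapesTo env (.restr P L) (.par · (.restr D L)) :=
  fun Y hY => (h Y hY).restr.sc_right (.symm (.restr_scope_par hY.restrFree))

theorem EscapesTo.par_par (h : EscapesTo env P (.par · D)) :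
    EscapesTo env (.par P Q) (.par · (.par D Q)) :=
  fun Y hY => (h Y hY).par_left.sc_right (.symm .par_assoc)

theorem Muted.sc_restr_par (h : Muted env l X) :
    SC env X (.restr (.par X (.pre l.bar ∅ Y)) {l}) := by
  obtain ⟨X₀, e, hl, hbar⟩ := h
  have free : RestrFree env X₀ {l} := fun x v => by
    refine ⟨fun hx => hl (hx ▸ v), fun hx => hbar ?_⟩
    rwa [← Set.mem_singleton_iff.1 hx, Label.bar_bar]
  have co_blocked : SC env (.restr (.pre l.bar ∅ Y) {l}) .nil := .restr_pre_in (.inr (by simp))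
  have absorb : SC env (.restr (.par X₀ (.pre l.bar ∅ Y)) {l}) X₀ :=
    (SC.restr_scope_par free).trans ((SC.par_congr (.refl _) co_blocked).trans .par_zero)
  exact e.trans (absorb.symm.trans (.restr_congr (.par_congr e.symm (.refl _))))

theorem StepA.restr_par_tau (hl : l.isChan) (hY : Invisible env Y)
    (h : StepA env Z (.vis l) Z') :
    StepA env (.restr (.par Z (.pre l.bar ∅ Y)) {l}) .tau (.par Y (.restr Z' {l})) := by
  obtain ⟨H, R, st⟩ := h
  have handshake : StepA env (.par Z (.pre l.bar ∅ Y)) .tau (.par Z' Y) :=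
    ⟨_, _, hl.sync_eq_tau ▸ st.par_sync .act⟩
  refine (handshake.restr nofun).sc (.refl _) (.symm ?_)
  exact (SC.restr_congr .par_comm).trans (.restr_scope_par hY.restrFree)

-- A muted process is congruent to its own composition with `l.bar` guarding an arbitrary `Y`, under
-- a restriction to `{l}`; its concealed `l`-step then releases `Y`.
theorem Muted.escapesTo (hX : Muted env l X) (hl : l.isChan)
    (w : Relation.ReflTransGen (TauStep env) X Z) (h : StepA env Z (.vis l) Z') :
    EscapesTo env X (.par · (.restr Z' {l})) := by
  intro Y hY
  have before : Relation.ReflTransGen (TauStep env)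
      (.restr (.par X (.pre l.bar ∅ Y)) {l}) (.restr (.par Z (.pre l.bar ∅ Y)) {l}) :=
    w.lift (p := TauStep env) (fun V => Proc.restr (.par V (.pre l.bar ∅ Y)) {l})
      (fun _ _ st => (st.par_left id).restr nofun) _ _
  exact SilentSteps.sc_left (.tail' before (h.restr_par_tau hl hY)) hX.sc_restr_par

/-- What an unguarded `l`-prefix of exposure `s` enables its process to do. -/
def Ability (env : ℕ → Proc) (l : Label) : Exposure → Proc → Prop
  | .visible, P => ∃ P', StepA env P (.vis l) P'
  | .confined, P => ∃ C, TransparentCtx l C ∧ EscapesTo env P C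
  | .mobile, P => ∃ D, EscapesTo env P (.par · D)

namespace Ability

theorem confined_of_ne_visible (h : Ability env l s P) (hs : s ≠ .visible) :
    Ability env l .confined P := by
  cases s with
  | visible => exact absurd rfl hs
  | confined => exact h
  | mobile =>
    obtain ⟨D, esc⟩ := h
    exact ⟨_, TransparentCtx.id.par_l, esc⟩

theorem sc (h : Ability env l s P) (e : SC env Q P) : Ability env l s Q := by
  cases s with
  | visible =>
    obtain ⟨P', st⟩ := h
    exact ⟨P', st.sc e (.refl _)⟩
  | confined =>
    obtain ⟨C, hC, esc⟩ := h
    exact ⟨C, hC, fun Y hY => (esc Y hY).sc_left e⟩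
  | mobile =>
    obtain ⟨D, esc⟩ := h
    exact ⟨D, fun Y hY => (esc Y hY).sc_left e⟩

theorem sum_left (h : Ability env l s P) : Ability env l s (.sum P Q) := by
  cases s with
  | visible =>
    obtain ⟨P', st⟩ := h
    exact ⟨P', st.sum_left⟩
  | confined =>
    obtain ⟨C, hC, esc⟩ := h
    exact ⟨C, hC, fun Y hY => (esc Y hY).sum_left⟩
  | mobile =>
    obtain ⟨D, esc⟩ := h
    exact ⟨D, fun Y hY => (esc Y hY).sum_left⟩

theorem par_left (h : Ability env l s P) (hl : l.isChan) : Ability env l s (.par P Q) := by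
  cases s with
  | visible =>
    obtain ⟨P', st⟩ := h
    exact ⟨_, st.par_left hl.not_isClock⟩
  | confined =>
    obtain ⟨C, hC, esc⟩ := h
    exact ⟨_, hC.par_l, fun Y hY => (esc Y hY).par_left⟩
  | mobile =>
    obtain ⟨D, esc⟩ := h
    exact ⟨_, esc.par_par⟩

theorem restr (h : Ability env l s P) (pass : Passes l s L) : Ability env l s (.restr P L) := by
  cases s with
  | visible =>
    obtain ⟨P', st⟩ := h
    exact ⟨_, st.restr (by rintro _ ⟨⟩; exact pass.resolve_left nofun)⟩
  | confined =>
    obtain ⟨C, hC, esc⟩ := h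
    obtain ⟨h₁, h₂⟩ := pass.resolve_left nofun
    exact ⟨_, hC.restr h₁ h₂, fun Y hY => (esc Y hY).restr⟩
  | mobile =>
    obtain ⟨D, esc⟩ := h
    exact ⟨_, esc.restr_par⟩

theorem hide_visible (h : Ability env l .visible P) (hK : l ∉ K) :
    Ability env l .visible (.hide P K) := by
  obtain ⟨P', st⟩ := h
  exact ⟨_, st.hide (by rintro _ ⟨⟩; exact hK)⟩

theorem hide_confined (h : Ability env l .confined P) (hK : l ∉ K) :
    Ability env l .confined (.hide P K) := by
  obtain ⟨C, hC, esc⟩ := h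
  exact ⟨_, hC.hide hK, fun Y hY => (esc Y hY).hide⟩

theorem mobile_of_visible (h : Ability env l .visible P) (hl : l.isChan) (hm : Muted env l P) :
    Ability env l .mobile P := by
  obtain ⟨P', st⟩ := h
  exact ⟨_, hm.escapesTo hl .refl st⟩

theorem mobile_of_confined (h : Ability env l .confined P) (hl : l.isChan) (hm : Muted env l P) :
    Ability env l .mobile P := by
  obtain ⟨C, hC, esc⟩ := h
  have reach : SilentSteps env P (C (.veil l (.pre l ∅ .nil))) := esc _ hl.invisible_veil
  exact ⟨_, hm.escapesTo hl reach.to_reflTransGen (hC.stepA hl stepA_pre.veil)⟩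

end Ability

theorem PrefixStep.ability (t : PrefixStep env l H s P P') (hl : l.isChan) :
    Ability env l s P := by
  induction t with
  | pre => exact ⟨_, stepA_pre⟩
  | sum_l _ ih => exact ih.sum_left
  | sum_r _ ih => exact ih.sum_left.sc .sum_comm
  | par_l _ ih => exact ih.par_left hl
  | par_r _ ih => exact (ih.par_left hl).sc .par_comm
  | restr _ pass ih => exact ih.restr pass
  | hide_visible _ hK _ ih => exact ih.hide_visible hK
  | hide_capture _ hK hbar ih =>
    exact (ih.hide_visible hK).mobile_of_visible hl (muted_hide_of_bar_mem hbar)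
  | hide_mobile _ hs hK hm ih =>
    exact ((ih.confined_of_ne_visible hs).hide_confined hK).mobile_of_confined hl hm
  | hide_confined _ hs hK ih => exact (ih.confined_of_ne_visible hs).hide_confined hK
  | ident _ ih => exact ih.sc .const

/-- The blocking sets written in the prefixes of a term, identifiers not being unfolded. -/
def Proc.blockingSets : Proc → Set (Set Label)
  | .nil => ∅
  | .pre _ H P => insert H P.blockingSets
  | .sum P Q => P.blockingSets ∪ Q.blockingSets
  | .par P Q => P.blockingSets ∪ Q.blockingSets
  | .restr P _ => P.blockingSets
  | .hide P _ => P.blockingSets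
  | .ident _ => ∅

theorem Proc.countable_blockingSets (P : Proc) : P.blockingSets.Countable := by
  induction P with
  | nil => exact Set.countable_empty
  | pre _ H _ ih => exact ih.insert H
  | sum _ _ ihP ihQ => exact ihP.union ihQ
  | par _ _ ihP ihQ => exact ihP.union ihQ
  | restr _ _ ih => exact ih
  | hide _ _ ih => exact ih
  | ident => exact Set.countable_empty

/-- The blocking set `S` occurs neither in `P` nor in the defining equations. -/
structure FreshFor (env : ℕ → Proc) (S : Set Label) (P : Proc) : Prop where
  notMem : S ∉ P.blockingSets
  notMem_env : ∀ n, S ∉ (env n).blockingSets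

theorem exists_notMem_of_countable {α : Type*} [Infinite α] {𝒮 : Set (Set α)}
    (h : 𝒮.Countable) : ∃ S, S ∉ 𝒮 := by
  by_contra! all_mem
  have : Countable (Set α) := Set.countable_univ_iff.1 (Set.eq_univ_of_forall all_mem ▸ h)
  obtain ⟨f, hf⟩ := exists_injective_nat (Set α)
  exact Function.cantor_injective _ ((Infinite.natEmbedding α).injective.comp hf)

theorem exists_freshFor (env : ℕ → Proc) (P : Proc) : ∃ S, FreshFor env S P := by
  have : Infinite Label := .of_injective Label.name fun _ _ => Label.name.inj
  obtain ⟨S, hS⟩ := exists_notMem_of_countable <| P.countable_blockingSets.union <|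
    Set.countable_iUnion fun n => (env n).countable_blockingSets
  obtain ⟨hP, henv⟩ := not_or.1 hS
  exact ⟨S, hP, by simpa using henv⟩

theorem FreshFor.step (hS : FreshFor env S P) (t : PrefixStep env l H s P P') :
    H ≠ S ∧ FreshFor env S P' := by
  suffices H ≠ S ∧ S ∉ P'.blockingSets from ⟨this.1, this.2, hS.notMem_env⟩
  obtain ⟨hP, henv⟩ := hS
  induction t with
  | pre =>
    obtain ⟨ne, hP⟩ := not_or.1 hP
    exact ⟨Ne.symm ne, hP⟩
  | sum_l _ ih => exact ih (hP ∘ .inl)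
  | sum_r _ ih => exact ih (hP ∘ .inr)
  | par_l _ ih =>
    obtain ⟨ne, hP'⟩ := ih (hP ∘ .inl)
    exact ⟨ne, not_or.2 ⟨hP', hP ∘ .inr⟩⟩
  | par_r _ ih =>
    obtain ⟨ne, hQ'⟩ := ih (hP ∘ .inr)
    exact ⟨ne, not_or.2 ⟨hP ∘ .inl, hQ'⟩⟩
  | restr _ _ ih => exact ih hP
  | hide_visible _ _ _ ih | hide_capture _ _ _ ih | hide_mobile _ _ _ _ ih
  | hide_confined _ _ _ ih => exact ih hP
  | ident _ ih => exact ih (henv _)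

/-- `X` has an unguarded prefix `l:S`. -/
def Tagged (env : ℕ → Proc) (l : Label) (S : Set Label) (X : Proc) : Prop :=
  ∃ s X', PrefixStep env l S s X X'

theorem FreshFor.not_tagged (hS : FreshFor env S P) : ¬ Tagged env l S P := by
  rintro ⟨_, _, t⟩
  exact (hS.step t).1 rfl

namespace Tagged

theorem sc (h : Tagged env l S X) (e : SC env X Y) : Tagged env l S Y := by
  obtain ⟨_, _, t⟩ := h
  obtain ⟨_, _, _, u, _⟩ := t.sc e
  exact ⟨_, _, u⟩

theorem par_left (h : Tagged env l S X) : Tagged env l S (.par X Y) := by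
  obtain ⟨_, _, t⟩ := h
  exact ⟨_, _, .par_l t⟩

theorem par_right (h : Tagged env l S Y) : Tagged env l S (.par X Y) := by
  obtain ⟨_, _, t⟩ := h
  exact ⟨_, _, .par_r t⟩

theorem restr (h : Tagged env l S X) (hl : l ∉ L) (hbar : l.bar ∉ L) :
    Tagged env l S (.restr X L) := by
  obtain ⟨_, _, t⟩ := h
  exact ⟨_, _, .restr t (.inr ⟨hl, hbar⟩)⟩

theorem hide (h : Tagged env l S X) (hK : l ∉ K) : Tagged env l S (.hide X K) := by
  obtain ⟨_, _, t⟩ := h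
  obtain ⟨_, u⟩ := t.exists_hide hK
  exact ⟨_, _, u⟩

end Tagged

/-- `X` is tagged and stays so after executing any of its unguarded `l`-prefixes. -/
structure StablyTagged (env : ℕ → Proc) (l : Label) (S : Set Label) (X : Proc) : Prop where
  tagged : Tagged env l S X
  step : ∀ ⦃H s X'⦄, PrefixStep env l H s X X' → Tagged env l S X'

namespace StablyTagged

theorem of_par (hX : Tagged env l S X) (hY : Tagged env l S Y) :
    StablyTagged env l S (.par X Y) where
  tagged := hX.par_left
  step
    | _, _, _, .par_l _ => hY.par_right
    | _, _, _, .par_r _ => hX.par_left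

theorem par_left (h : StablyTagged env l S X) : StablyTagged env l S (.par X Y) where
  tagged := h.tagged.par_left
  step
    | _, _, _, .par_l t => (h.step t).par_left
    | _, _, _, .par_r _ => h.tagged.par_left

theorem par_right (h : StablyTagged env l S Y) : StablyTagged env l S (.par X Y) where
  tagged := h.tagged.par_right
  step
    | _, _, _, .par_l _ => h.tagged.par_right
    | _, _, _, .par_r t => (h.step t).par_right

theorem restr (h : StablyTagged env l S X) (hl : l ∉ L) (hbar : l.bar ∉ L) :
    StablyTagged env l S (.restr X L) where
  tagged := h.tagged.restr hl hbar
  step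
    | _, _, _, .restr t _ => (h.step t).restr hl hbar

theorem hide (h : StablyTagged env l S X) (hK : l ∉ K) : StablyTagged env l S (.hide X K) where
  tagged := h.tagged.hide hK
  step _ _ _ t := by
    obtain ⟨_, _, u, _, rfl⟩ := t.exists_of_hide
    exact (h.step u).hide hK

end StablyTagged

theorem TransparentCtx.stablyTagged (hC : TransparentCtx l C) (h : StablyTagged env l S X) :
    StablyTagged env l S (C X) := by
  induction hC with
  | id => exact h
  | par_l _ ih => exact ih.par_left
  | par_r _ ih => exact ih.par_right
  | restr _ hl hbar ih => exact ih.restr hl hbar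
  | hide _ hK ih => exact ih.hide hK

theorem Coherent.of_deriv (hP : Coherent env P) (h : Deriv env P Q) : Coherent env Q :=
  fun Q' hQ' => hP Q' (h.trans hQ')

theorem Coherent.join_of_not_sc (hP : Coherent env P) (st₁ : Step env P (.vis l) H₁ R₁ P₁)
    (st₂ : Step env P (.vis l) H₂ R₂ P₂) (ne : ¬ SC env P₁ P₂) :
    (∃ Q, StepA env P₁ (.vis l) Q ∧ StepA env P₂ (.vis l) Q) ∧ ∃ R, StepA env R₁ (.vis l) R := by
  obtain ⟨_, _, R, _, Q, _, _, u₁, u₂, _, _, context_steps⟩ :=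
    hP P .refl _ _ _ _ _ _ _ _ st₁ st₂ (.inr (.inl ne)) ⟨absurd rfl, nofun, nofun⟩
  have chan_or_clock : l.isChan ∨ l.isClock := by
    cases l <;> simp [Label.isChan, Label.isClock]
  have hR := context_steps <| chan_or_clock.imp
    (fun hl => ⟨⟨l, hl, rfl⟩, ⟨l, hl, rfl⟩, .inr ne⟩) .inl
  exact ⟨⟨Q, ⟨_, _, u₁⟩, ⟨_, _, u₂⟩⟩, R, hR.1⟩

-- Fill the hole with a choice between stopping and releasing two copies of a prefix whose blocking
-- set `S` occurs nowhere else: an `l`-step from the first branch cannot create `S`, and one from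
-- the second consumes at most one copy, so the two branches have no common `l`-derivative.
theorem Coherent.not_escapesTo (hP : Coherent env P) (hl : l.isChan) (hC : TransparentCtx l C) :
    ¬ EscapesTo env P C := by
  intro esc
  obtain ⟨S, fresh⟩ := exists_freshFor env (C (Proc.nil.veil l))
  let FF : Proc := .par (.pre l S .nil) (.pre l S .nil)
  let Y : Proc := .veil l (.sum (.pre l ∅ .nil) (.pre l ∅ FF))
  have tagged : StablyTagged env l S (C (FF.veil l)) :=
    hC.stablyTagged (.hide (.of_par ⟨_, _, .pre⟩ ⟨_, _, .pre⟩) (by simp))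
  have coherent : Coherent env (C Y) :=
    hP.of_deriv <| Relation.ReflTransGen.mono (r := TauStep env)
      (p := fun P Q => ∃ a, StepA env P a Q) (fun _ _ st => ⟨_, st⟩) _ _
      (esc Y hl.invisible_veil).to_reflTransGen
  obtain ⟨_, _, halt⟩ : StepA env (C Y) (.vis l) (C (Proc.nil.veil l)) :=
    hC.stepA hl stepA_pre.sum_left.veil
  obtain ⟨_, _, release⟩ : StepA env (C Y) (.vis l) (C (FF.veil l)) :=
    hC.stepA hl (stepA_pre.sum_left.sc .sum_comm (.refl _)).veil
  have not_sc : ¬ SC env (C (Proc.nil.veil l)) (C (FF.veil l)) :=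
    fun e => fresh.not_tagged (tagged.tagged.sc e.symm)
  obtain ⟨⟨Q, ⟨_, _, u₁⟩, ⟨_, _, u₂⟩⟩, -⟩ := coherent.join_of_not_sc halt release not_sc
  obtain ⟨_, _, Q₁, t₁, e₁⟩ := u₁.exists_prefixStep
  obtain ⟨_, _, Q₂, t₂, e₂⟩ := u₂.exists_prefixStep
  exact (fresh.step t₁).2.not_tagged ((tagged.step t₂).sc ((e₂ hl).symm.trans (e₁ hl)))

theorem Coherent.sc_of_clock_steps (hP : Coherent env P)
    (st₁ : Step env P (.vis (.clock c)) H₁ R₁ P₁) (st₂ : Step env P (.vis (.clock c)) H₂ R₂ P₂) :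
    SC env P₁ P₂ := by
  by_contra ne
  obtain ⟨-, R, hR⟩ := hP.join_of_not_sc st₁ st₂ ne
  exact StepA.not_of_sc_nil st₁.context_sc_nil_of_clock hR

theorem Coherent.initAct_context (hP : Coherent env P) (hl : l.isChan)
    (st : Step env P (.vis l) H R P') (hR : StepA env R (.vis l) R') : InitAct env R (.vis l) := by
  obtain ⟨_, _, stR⟩ := hR
  obtain ⟨_, s, _, t, -⟩ := stR.exists_prefixStep
  by_cases hs : s = .visible
  · subst hs
    exact t.initAct hl
  obtain ⟨C, X, hC, eR, eP'⟩ := st.exists_transparentCtx hl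
  obtain ⟨s₁, _, le, t₁, -⟩ := t.sc eR
  obtain ⟨s₂, _, t₂, hs₂⟩ := hC.prefixStep_of_nil (X := X) t₁
  have concealed : s₂ ≠ .visible := mt hs₂.1 (le.ne_visible hs)
  obtain ⟨D, hD, esc⟩ := ((t₂.ability hl).confined_of_ne_visible concealed).sc eP'
  have coherent : Coherent env P' := hP.of_deriv (.single ⟨_, _, _, st⟩)
  exact absurd esc (coherent.not_escapesTo hl hD)

theorem Coherent.sc_of_chan_steps (hP : Coherent env P) (hl : l.isChan)
    (st₁ : Step env P (.vis l) H₁ R₁ P₁) (hR₁ : ¬ InitAct env R₁ (.vis l))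
    (st₂ : Step env P (.vis l) H₂ R₂ P₂) : SC env P₁ P₂ := by
  by_contra ne
  obtain ⟨-, R, hR⟩ := hP.join_of_not_sc st₁ st₂ ne
  exact hR₁ (hP.initAct_context hl st₁ hR)

/-- Action determinism and clock determinism. -/
theorem action_determinism (env : ℕ → Proc) (P : Proc) (hP : Coherent env P) :
    (∀ (l : Label) (H₁ : Set Act) (R₁ P₁ : Proc),
        Step env P (Act.vis l) H₁ R₁ P₁ → ¬ InitAct env R₁ (Act.vis l) →
        ∀ (H₂ : Set Act) (R₂ P₂ : Proc),
          Step env P (Act.vis l) H₂ R₂ P₂ → SC env P₁ P₂) ∧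
    (∀ (c : ℕ) (H₁ H₂ : Set Act) (R₁ R₂ P₁ P₂ : Proc),
        Step env P (Act.vis (Label.clock c)) H₁ R₁ P₁ →
        Step env P (Act.vis (Label.clock c)) H₂ R₂ P₂ → SC env P₁ P₂) := by
  refine ⟨fun l H₁ R₁ P₁ st₁ hR₁ H₂ R₂ P₂ st₂ => ?_,
    fun c H₁ H₂ R₁ R₂ P₁ P₂ st₁ st₂ => hP.sc_of_clock_steps st₁ st₂⟩
  cases l with
  | name a => exact hP.sc_of_chan_steps (l := .name a) trivial st₁ hR₁ st₂
  | coname a => exact hP.sc_of_chan_steps (l := .coname a) trivial st₁ hR₁ st₂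
  | clock c => exact hP.sc_of_clock_steps st₁ st₂

end CCSspt
end

section
/- Characterisation of pivot policies: a precedence policy π = (L, ⟶̇) is a pivot policy (i.e. π̄ ⪯ π) if and only if L̄ ⊆ L and for all ℓ₁, ℓ₂ ∈ L with ℓ₁ ≠ ℓ₂ one has π ⊩ ℓ₁ ◇ ℓ₂ or π ⊩ ℓ̄₁ ◇ ℓ̄₂. -/
set_option autoImplicit true

namespace CCSspt

/-!
The dual precedence is symmetric, so `π̄ ⪯ π` says that any two labels of `L̄` are either
independent in `π` or related in `π̄`. For distinct labels the latter means that the complements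
are independent in `π`, for equal labels it holds trivially, and `L̄ ⊆ L` forces `L̄ = L`.
-/

theorem Label.bar_involutive : Function.Involutive Label.bar := Label.bar_bar

theorem mem_barSet {K : Set Label} {l : Label} : l ∈ barSet K ↔ l.bar ∈ K := by
  rw [barSet, Label.bar_involutive.image_eq_preimage_symm, Set.mem_preimage]

theorem barSet_eq_self_of_subset {K : Set Label} (hK : barSet K ⊆ K) : barSet K = K :=
  hK.antisymm fun _ hl => mem_barSet.mpr (hK (Set.mem_image_of_mem Label.bar hl))

namespace Policy

theorem Indep.symm {π : Policy} {l₁ l₂ : Label} (h : π.Indep l₁ l₂) : π.Indep l₂ l₁ :=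
  ⟨h.2.1, h.1, h.2.2.2, h.2.2.1⟩

theorem indep_or_prec_or_prec {π : Policy} {l₁ l₂ : Label} (h₁ : l₁ ∈ π.alph)
    (h₂ : l₂ ∈ π.alph) : π.Indep l₁ l₂ ∨ π.prec l₁ l₂ ∨ π.prec l₂ l₁ := by
  unfold Indep
  tauto

theorem le_iff_indep_or_prec {π₁ π₂ : Policy} [Std.Symm π₁.prec] :
    Policy.le π₁ π₂ ↔ π₁.alph ⊆ π₂.alph ∧
      ∀ l₁ l₂, l₁ ∈ π₁.alph → l₂ ∈ π₁.alph → π₂.Indep l₁ l₂ ∨ π₁.prec l₁ l₂ := by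
  refine and_congr_right fun halph => ⟨fun hprec l₁ l₂ h₁ h₂ => ?_, fun h l₁ l₂ h₁ h₂ hprec => ?_⟩
  · rcases indep_or_prec_or_prec (halph h₁) (halph h₂) with hindep | h₁₂ | h₂₁
    · exact .inl hindep
    · exact .inr (hprec l₁ l₂ h₁ h₂ h₁₂)
    · exact .inr (symm_of π₁.prec (hprec l₂ l₁ h₂ h₁ h₂₁))
  · exact (h l₁ l₂ h₁ h₂).resolve_left fun hindep => hindep.2.2.1 hprec

instance (π : Policy) : Std.Symm π.dual.prec where
  symm _ _ := fun ⟨h₁, h₂, h⟩ => ⟨h₂, h₁, h.imp Eq.symm Indep.symm⟩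

theorem dual_prec_self {π : Policy} {l : Label} (hl : l ∈ π.dual.alph) : π.dual.prec l l :=
  ⟨mem_barSet.mp hl, mem_barSet.mp hl, .inl rfl⟩

theorem dual_prec_iff_indep_bar {π : Policy} {l₁ l₂ : Label} (hne : l₁ ≠ l₂) :
    π.dual.prec l₁ l₂ ↔ π.Indep l₁.bar l₂.bar where
  mp h := h.2.2.resolve_left (Label.bar_involutive.injective.ne hne)
  mpr h := ⟨h.1, h.2.1, .inr h⟩

end Policy

/-- Characterisation of pivot policies. -/
theorem pivot_characterisation (π : Policy) :
    π.IsPivot ↔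
      (barSet π.alph ⊆ π.alph ∧
        ∀ l₁ l₂, l₁ ∈ π.alph → l₂ ∈ π.alph → l₁ ≠ l₂ →
          π.Indep l₁ l₂ ∨ π.Indep l₁.bar l₂.bar) := by
  rw [Policy.IsPivot, Policy.le_iff_indep_or_prec]
  refine and_congr_right fun hbar => ?_
  have halph : π.dual.alph = π.alph := barSet_eq_self_of_subset hbar
  refine forall₂_congr fun l₁ l₂ => ?_
  rw [halph]
  refine forall₂_congr fun h₁ _ => ?_
  rcases eq_or_ne l₁ l₂ with rfl | hne
  · have hself : π.dual.prec l₁ l₁ := Policy.dual_prec_self (halph ▸ h₁)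
    exact iff_of_true (.inr hself) (absurd rfl)
  · rw [Policy.dual_prec_iff_indep_bar hne, forall_prop_of_true hne]

end CCSspt
end

section
/- Coherence of rendez-vous prefixes: let Q : π (Q is coherent and conforms to π) and let ℓ ∈ ℛ be a rendez-vous label. If ℓ ∈ H and H ⊆ {ℓ' ∈ ℒ : π ⊩ ℓ' ⟶̇ ℓ}, then the prefix process ℓ:H.Q is coherent and conforms to π, i.e. ℓ:H.Q : π. -/
set_option autoImplicit true

namespace CCSspt

/-!
Structural congruence rewrites `ℓ:H.Q` into arbitrarily complicated processes, so the transitions of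
a prefix cannot be read off its syntax. Two properties survive every rewriting: which unguarded
prefixes a process can fire, with their blocking sets and their targets up to `≡`, and whether
the process can act in any other way, by a synchronisation or below a hiding. A prefix `ℓ:H.Q`
cannot act in any other way, so all of its transitions perform `ℓ`, lead to `Q` up to `≡`, and carry
a blocking set that contains `ℓ` if `H` does. If `ℓ` is a clock or `ℓ ∈ H`, no two of them therefore
satisfy the premises of the diamond property; every other derivative of `ℓ:H.Q` is a derivative of
`Q` up to `≡`.
-/

/-- `PrefixStep env P x K S`: firing an unguarded prefix `x:K` of `P` leads to `S`. Unlike `Step`,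
this relation has no rule for `≡`, synchronisation or hiding, it does not filter `K` under a
restriction, and clocks may fire alone in a parallel composition: otherwise `P | 0 ≡ P` would not
preserve it. -/
inductive PrefixStep_s7 (env : ℕ → Proc) : Proc → Label → Set Label → Proc → Prop
  | pre : PrefixStep_s7 env (.pre l K P) l K P
  | sum_l : PrefixStep_s7 env P x K S → PrefixStep_s7 env (.sum P Q) x K S
  | sum_r : PrefixStep_s7 env Q x K S → PrefixStep_s7 env (.sum P Q) x K S
  | par_l : PrefixStep_s7 env P x K S → PrefixStep_s7 env (.par P Q) x K (.par S Q)
  | par_r : PrefixStep_s7 env Q x K S → PrefixStep_s7 env (.par P Q) x K (.par P S)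
  | restr : PrefixStep_s7 env P x K S → x ∉ L → x.bar ∉ L →
      PrefixStep_s7 env (.restr P L) x K (.restr S L)
  | ident : PrefixStep_s7 env (env n) x K S → PrefixStep_s7 env (.ident n) x K S

/-- `PrefixStep` with its target taken up to `≡`; in this form it is invariant under `≡` of the
source. -/
def PrefixStepMod (env : ℕ → Proc) (P : Proc) (x : Label) (K : Set Label) (S : Proc) : Prop :=
  ∃ T, PrefixStep_s7 env P x K T ∧ SC env T S

/-- `P` has an unguarded prefix with label `x` that can fire. -/
def Exposes (env : ℕ → Proc) (P : Proc) (x : Label) : Prop :=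
  ∃ K S, PrefixStep_s7 env P x K S

/-- `P` contains active components that may synchronise or that lie below a hiding. This
over-approximates the transitions not covered by `PrefixStep`: whether a restriction or the hiding
set lets them through is ignored. -/
inductive Interacts (env : ℕ → Proc) : Proc → Prop
  | hide : Interacts env P → Interacts env (.hide P L)
  | hide_exposes : Exposes env P x → Interacts env (.hide P L)
  | sum_l : Interacts env P → Interacts env (.sum P Q)
  | sum_r : Interacts env Q → Interacts env (.sum P Q)
  | par_l : Interacts env P → Interacts env (.par P Q)
  | par_r : Interacts env Q → Interacts env (.par P Q)
  | sync : Exposes env P x → Exposes env Q x.bar → Interacts env (.par P Q)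
  | restr : Interacts env P → Interacts env (.restr P L)
  | ident : Interacts env (env n) → Interacts env (.ident n)

section

variable {env : ℕ → Proc} {P P' Q R S : Proc} {l x : Label} {K K' L L' : Set Label} {n : ℕ}

namespace SC

theorem left_congr (h : SC env P Q) : SC env P S ↔ SC env Q S :=
  ⟨h.symm.trans, h.trans⟩

theorem restr_of_fresh (h : ∀ y, VisLabel env P y → y ∉ L ∧ y.bar ∉ L) : SC env (.restr P L) P :=
  (SC.par_zero.symm.restr_congr.trans (.restr_scope_par h)).trans
    ((SC.par_congr (.refl P) .restr_nil).trans .par_zero)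

end SC

namespace PrefixStep_s7

theorem nil_iff : PrefixStep_s7 env .nil x K S ↔ False :=
  ⟨nofun, nofun⟩

theorem pre_iff : PrefixStep_s7 env (.pre l K P) x K' S ↔ x = l ∧ K' = K ∧ S = P :=
  ⟨by rintro ⟨⟩; exact ⟨rfl, rfl, rfl⟩, by rintro ⟨rfl, rfl, rfl⟩; exact .pre⟩

theorem sum_iff :
    PrefixStep_s7 env (.sum P Q) x K S ↔ PrefixStep_s7 env P x K S ∨ PrefixStep_s7 env Q x K S :=
  ⟨by rintro (_ | h | h) <;> simp [h], fun h => h.elim .sum_l .sum_r⟩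

theorem par_iff : PrefixStep_s7 env (.par P Q) x K S ↔
    (∃ P', PrefixStep_s7 env P x K P' ∧ S = .par P' Q) ∨
      ∃ Q', PrefixStep_s7 env Q x K Q' ∧ S = .par P Q' := by
  constructor
  · rintro (_ | _ | _ | h | h)
    · exact .inl ⟨_, h, rfl⟩
    · exact .inr ⟨_, h, rfl⟩
  · rintro (⟨P', h, rfl⟩ | ⟨Q', h, rfl⟩)
    · exact .par_l h
    · exact .par_r h

theorem restr_iff : PrefixStep_s7 env (.restr P L) x K S ↔
    ∃ P', PrefixStep_s7 env P x K P' ∧ (x ∉ L ∧ x.bar ∉ L) ∧ S = .restr P' L := by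
  constructor
  · rintro (_ | _ | _ | _ | _ | ⟨h, hx, hx'⟩)
    exact ⟨_, h, ⟨hx, hx'⟩, rfl⟩
  · rintro ⟨P', h, ⟨hx, hx'⟩, rfl⟩
    exact .restr h hx hx'

theorem exists_restr_iff {p : Proc → Prop} : (∃ S, PrefixStep_s7 env (.restr P L) x K S ∧ p S) ↔
    (x ∉ L ∧ x.bar ∉ L) ∧ ∃ P', PrefixStep_s7 env P x K P' ∧ p (.restr P' L) := by
  simp only [restr_iff]
  constructor
  · rintro ⟨_, ⟨P', h, hx, rfl⟩, hp⟩
    exact ⟨hx, P', h, hp⟩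
  · rintro ⟨hx, P', h, hp⟩
    exact ⟨_, ⟨P', h, hx, rfl⟩, hp⟩

theorem hide_iff : PrefixStep_s7 env (.hide P L) x K S ↔ False :=
  ⟨nofun, nofun⟩

theorem ident_iff : PrefixStep_s7 env (.ident n) x K S ↔ PrefixStep_s7 env (env n) x K S :=
  ⟨by rintro ⟨⟩; assumption, .ident⟩

theorem visLabel (h : PrefixStep_s7 env P x K P') : VisLabel env P x := by
  induction h with
  | pre => exact .pre_act
  | sum_l _ ih => exact ih.sum_l
  | sum_r _ ih => exact ih.sum_r
  | par_l _ ih => exact ih.par_l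
  | par_r _ ih => exact ih.par_r
  | restr _ hx hx' ih => exact ih.restr hx hx'
  | ident _ ih => exact ih.ident

theorem visLabel_of_target_s7 (h : PrefixStep_s7 env P x K P') {y : Label} (hy : VisLabel env P' y) :
    VisLabel env P y := by
  induction h with
  | pre => exact hy.pre_cont
  | sum_l _ ih => exact (ih hy).sum_l
  | sum_r _ ih => exact (ih hy).sum_r
  | par_l _ ih =>
    cases hy with
    | par_l hy => exact (ih hy).par_l
    | par_r hy => exact hy.par_r
  | par_r _ ih =>
    cases hy with
    | par_l hy => exact hy.par_l
    | par_r hy => exact (ih hy).par_r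
  | restr _ _ _ ih =>
    cases hy with
    | restr hy hyL hyL' => exact (ih hy).restr hyL hyL'
  | ident _ ih => exact (ih hy).ident

end PrefixStep_s7

namespace PrefixStepMod

theorem target_congr (h : PrefixStepMod env P x K S) (hS : SC env S R) :
    PrefixStepMod env P x K R :=
  let ⟨P', hP, hP'⟩ := h
  ⟨P', hP, hP'.trans hS⟩

theorem nil_iff : PrefixStepMod env .nil x K S ↔ False := by
  simp only [PrefixStepMod, PrefixStep_s7.nil_iff, false_and, exists_false]

theorem pre_iff : PrefixStepMod env (.pre l K P) x K' S ↔ x = l ∧ K' = K ∧ SC env P S := by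
  simp [PrefixStepMod, PrefixStep_s7.pre_iff, and_assoc]

theorem sum_iff : PrefixStepMod env (.sum P Q) x K S ↔
    PrefixStepMod env P x K S ∨ PrefixStepMod env Q x K S := by
  simp only [PrefixStepMod, PrefixStep_s7.sum_iff, or_and_right, exists_or]

theorem par_iff : PrefixStepMod env (.par P Q) x K S ↔
    (∃ P', PrefixStep_s7 env P x K P' ∧ SC env (.par P' Q) S) ∨
      ∃ Q', PrefixStep_s7 env Q x K Q' ∧ SC env (.par P Q') S := by
  simp only [PrefixStepMod, PrefixStep_s7.par_iff]
  grind

theorem restr_iff : PrefixStepMod env (.restr P L) x K S ↔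
    (x ∉ L ∧ x.bar ∉ L) ∧ ∃ P', PrefixStep_s7 env P x K P' ∧ SC env (.restr P' L) S :=
  PrefixStep_s7.exists_restr_iff

theorem hide_iff : PrefixStepMod env (.hide P L) x K S ↔ False := by
  simp only [PrefixStepMod, PrefixStep_s7.hide_iff, false_and, exists_false]

theorem ident_iff : PrefixStepMod env (.ident n) x K S ↔ PrefixStepMod env (env n) x K S := by
  simp only [PrefixStepMod, PrefixStep_s7.ident_iff]

theorem exists_context_congr {C D : Proc → Proc}
    (hPQ : ∀ S, PrefixStepMod env P x K S ↔ PrefixStepMod env Q x K S)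
    (hCD : ∀ {A B}, SC env A B → SC env (C A) (D B)) :
    (∃ P', PrefixStep_s7 env P x K P' ∧ SC env (C P') S) ↔
      ∃ Q', PrefixStep_s7 env Q x K Q' ∧ SC env (D Q') S := by
  constructor
  · rintro ⟨P', hP, hS⟩
    obtain ⟨Q', hQ, hQP⟩ := (hPQ P').1 ⟨P', hP, .refl P'⟩
    exact ⟨Q', hQ, (hCD hQP.symm).symm.trans hS⟩
  · rintro ⟨Q', hQ, hS⟩
    obtain ⟨P', hP, hPQ'⟩ := (hPQ Q').2 ⟨Q', hQ, .refl Q'⟩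
    exact ⟨P', hP, (hCD hPQ').trans hS⟩

theorem restr_sum_iff : PrefixStepMod env (.restr (.sum P Q) L) x K S ↔
    PrefixStepMod env (.restr P L) x K S ∨ PrefixStepMod env (.restr Q L) x K S := by
  simp only [restr_iff, PrefixStep_s7.sum_iff, or_and_right, exists_or, and_or_left]

theorem restr_par_iff : PrefixStepMod env (.restr (.par P Q) L) x K S ↔
    (x ∉ L ∧ x.bar ∉ L) ∧
      ((∃ P', PrefixStep_s7 env P x K P' ∧ SC env (.restr (.par P' Q) L) S) ∨
        ∃ Q', PrefixStep_s7 env Q x K Q' ∧ SC env (.restr (.par P Q') L) S) := by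
  simp only [restr_iff, PrefixStep_s7.par_iff]
  grind

theorem restr_iff_of_fresh (h : ∀ y, VisLabel env P y → y ∉ L ∧ y.bar ∉ L) :
    PrefixStepMod env (.restr P L) x K S ↔ PrefixStepMod env P x K S := by
  rw [restr_iff, ← exists_and_left]
  refine exists_congr fun P' => ?_
  rw [and_left_comm]
  refine and_congr_right fun hP => ?_
  rw [and_iff_right (h x hP.visLabel),
    (SC.restr_of_fresh fun y hy => h y (hP.visLabel_of_target_s7 hy)).left_congr]

theorem par_comm_iff : PrefixStepMod env (.par P Q) x K S ↔ PrefixStepMod env (.par Q P) x K S := by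
  rw [par_iff, par_iff, or_comm]
  exact or_congr (exists_congr fun _ => and_congr_right fun _ => SC.par_comm.left_congr)
    (exists_congr fun _ => and_congr_right fun _ => SC.par_comm.left_congr)

theorem par_assoc_iff : PrefixStepMod env (.par (.par P Q) R) x K S ↔
    PrefixStepMod env (.par P (.par Q R)) x K S := by
  have assoc {A B C : Proc} : SC env (.par (.par A B) C) S ↔ SC env (.par A (.par B C)) S :=
    SC.par_assoc.left_congr
  simp only [par_iff, PrefixStep_s7.par_iff]
  grind

theorem par_nil_iff : PrefixStepMod env (.par P .nil) x K S ↔ PrefixStepMod env P x K S := by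
  simp only [par_iff, PrefixStep_s7.nil_iff, false_and, exists_false, or_false]
  exact exists_congr fun _ => and_congr_right fun _ => SC.par_zero.left_congr

theorem restr_restr_iff : PrefixStepMod env (.restr (.restr P L) L') x K S ↔
    PrefixStepMod env (.restr P (L ∪ L')) x K S := by
  have union {A : Proc} : SC env (.restr (.restr A L) L') S ↔ SC env (.restr A (L ∪ L')) S :=
    SC.restr_restr.left_congr
  simp only [restr_iff, PrefixStep_s7.restr_iff]
  grind

theorem restr_pre_iff_of_notMem (h : l ∉ L) (h' : l.bar ∉ L) :
    PrefixStepMod env (.restr (.pre l K P) L) x K' S ↔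
      PrefixStepMod env (.pre l K (.restr P L)) x K' S := by
  simp only [restr_iff, pre_iff, PrefixStep_s7.pre_iff]
  grind

theorem restr_scope_par_iff (h : ∀ y, VisLabel env P y → y ∉ L ∧ y.bar ∉ L) :
    PrefixStepMod env (.restr (.par P Q) L) x K S ↔
      PrefixStepMod env (.par P (.restr Q L)) x K S := by
  have scope_left {P'} (hP : PrefixStep_s7 env P x K P') :
      SC env (.restr (.par P' Q) L) S ↔ SC env (.par P' (.restr Q L)) S :=
    (SC.restr_scope_par fun y hy => h y (hP.visLabel_of_target_s7 hy)).left_congr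
  have scope_right {Q'} (_ : PrefixStep_s7 env Q x K Q') :
      SC env (.restr (.par P Q') L) S ↔ SC env (.par P (.restr Q' L)) S :=
    (SC.restr_scope_par h).left_congr
  have fresh {P'} (hP : PrefixStep_s7 env P x K P') : x ∉ L ∧ x.bar ∉ L := h x hP.visLabel
  simp only [restr_par_iff, par_iff, PrefixStep_s7.exists_restr_iff]
  grind

theorem restr_distrib_par_iff
    (h : ∀ y, VisLabel env P y → VisLabel env Q y.bar → y ∉ L ∧ y.bar ∉ L) :
    PrefixStepMod env (.restr (.par P Q) L) x K S ↔
      PrefixStepMod env (.par (.restr P L) (.restr Q L)) x K S := by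
  have distrib_left {P'} (hP : PrefixStep_s7 env P x K P') :
      SC env (.restr (.par P' Q) L) S ↔ SC env (.par (.restr P' L) (.restr Q L)) S :=
    (SC.restr_par fun y hy => h y (hP.visLabel_of_target_s7 hy)).left_congr
  have distrib_right {Q'} (hQ : PrefixStep_s7 env Q x K Q') :
      SC env (.restr (.par P Q') L) S ↔ SC env (.par (.restr P L) (.restr Q' L)) S :=
    (SC.restr_par fun y hy hy' => h y hy (hQ.visLabel_of_target_s7 hy')).left_congr
  rw [restr_par_iff, par_iff, PrefixStep_s7.exists_restr_iff, PrefixStep_s7.exists_restr_iff,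
    ← and_or_left]
  exact and_congr_right fun _ => or_congr
    (exists_congr fun _ => and_congr_right distrib_left)
    (exists_congr fun _ => and_congr_right distrib_right)

end PrefixStepMod

theorem SC.prefixStepMod_iff (h : SC env P Q) :
    PrefixStepMod env P x K S ↔ PrefixStepMod env Q x K S := by
  induction h generalizing S with
  | refl => rfl
  | symm _ ih => exact ih.symm
  | trans _ _ ih₁ ih₂ => exact ih₁.trans ih₂
  | pre_congr h => simp only [PrefixStepMod.pre_iff, h.left_congr]
  | sum_congr _ _ ih₁ ih₂ => simp only [PrefixStepMod.sum_iff, ih₁, ih₂]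
  | par_congr h₁ h₂ ih₁ ih₂ =>
    rw [PrefixStepMod.par_iff, PrefixStepMod.par_iff]
    exact or_congr (PrefixStepMod.exists_context_congr (fun _ => ih₁) (.par_congr · h₂))
      (PrefixStepMod.exists_context_congr (fun _ => ih₂) (.par_congr h₁ ·))
  | restr_congr _ ih =>
    rw [PrefixStepMod.restr_iff, PrefixStepMod.restr_iff]
    exact and_congr_right fun _ => PrefixStepMod.exists_context_congr (fun _ => ih) .restr_congr
  | const => exact PrefixStepMod.ident_iff
  | sum_comm => simp only [PrefixStepMod.sum_iff, or_comm]
  | sum_assoc => simp only [PrefixStepMod.sum_iff, or_assoc]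
  | sum_zero => simp only [PrefixStepMod.sum_iff, PrefixStepMod.nil_iff, or_false]
  | sum_idem => simp only [PrefixStepMod.sum_iff, or_self]
  | par_comm => exact PrefixStepMod.par_comm_iff
  | par_assoc => exact PrefixStepMod.par_assoc_iff
  | par_zero => exact PrefixStepMod.par_nil_iff
  | restr_restr => exact PrefixStepMod.restr_restr_iff
  | hide_congr | hide_hide => simp only [PrefixStepMod.hide_iff]
  | hide_nil => simp only [PrefixStepMod.hide_iff, PrefixStepMod.nil_iff]
  | restr_nil => simp [PrefixStepMod.restr_iff, PrefixStepMod.nil_iff, PrefixStep_s7.nil_iff]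
  | restr_pre_in h =>
    simp only [PrefixStepMod.restr_iff, PrefixStepMod.nil_iff, PrefixStep_s7.pre_iff]
    grind
  | restr_pre_out h h' => exact PrefixStepMod.restr_pre_iff_of_notMem h h'
  | restr_sum => rw [PrefixStepMod.restr_sum_iff, PrefixStepMod.sum_iff]
  | restr_scope_sum h =>
    rw [PrefixStepMod.restr_sum_iff, PrefixStepMod.sum_iff, PrefixStepMod.restr_iff_of_fresh h]
  | restr_scope_par h => exact PrefixStepMod.restr_scope_par_iff h
  | restr_par h => exact PrefixStepMod.restr_distrib_par_iff h


namespace Exposes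

theorem iff_exists_prefixStepMod : Exposes env P x ↔ ∃ K S, PrefixStepMod env P x K S :=
  exists_congr fun _ => ⟨fun ⟨P', h⟩ => ⟨P', P', h, .refl P'⟩, fun ⟨_, P', h, _⟩ => ⟨P', h⟩⟩

theorem visLabel (h : Exposes env P x) : VisLabel env P x :=
  let ⟨_, _, hP⟩ := h
  hP.visLabel

theorem nil_iff : Exposes env .nil x ↔ False := by
  simp only [Exposes, PrefixStep_s7.nil_iff, exists_false]

theorem par_iff : Exposes env (.par P Q) x ↔ Exposes env P x ∨ Exposes env Q x := by
  simp only [Exposes, PrefixStep_s7.par_iff]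
  grind

theorem restr_iff : Exposes env (.restr P L) x ↔ Exposes env P x ∧ x ∉ L ∧ x.bar ∉ L := by
  simp only [Exposes, PrefixStep_s7.restr_iff]
  constructor
  · rintro ⟨K, _, P', h, hx, -⟩
    exact ⟨⟨K, P', h⟩, hx⟩
  · rintro ⟨⟨K, P', h⟩, hx⟩
    exact ⟨K, _, P', h, hx, rfl⟩

theorem hide_iff : Exposes env (.hide P L) x ↔ False := by
  simp only [Exposes, PrefixStep_s7.hide_iff, exists_false]

theorem exists_bar_comm :
    (∃ x, Exposes env P x ∧ Exposes env Q x.bar) ↔ ∃ x, Exposes env Q x ∧ Exposes env P x.bar := by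
  constructor <;> rintro ⟨x, h, h'⟩ <;> exact ⟨x.bar, h', by rwa [Label.bar_bar]⟩

end Exposes

theorem SC.exposes_iff (h : SC env P Q) : Exposes env P x ↔ Exposes env Q x := by
  simp only [Exposes.iff_exists_prefixStepMod, h.prefixStepMod_iff]

namespace Interacts

theorem nil_iff : Interacts env .nil ↔ False :=
  ⟨nofun, nofun⟩

theorem pre_iff : Interacts env (.pre l K P) ↔ False :=
  ⟨nofun, nofun⟩

theorem sum_iff : Interacts env (.sum P Q) ↔ Interacts env P ∨ Interacts env Q :=
  ⟨by rintro (_ | _ | h | h) <;> simp [h], fun h => h.elim .sum_l .sum_r⟩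

theorem par_iff : Interacts env (.par P Q) ↔
    Interacts env P ∨ Interacts env Q ∨ ∃ x, Exposes env P x ∧ Exposes env Q x.bar := by
  constructor
  · rintro (_ | _ | _ | _ | h | h | ⟨hP, hQ⟩)
    exacts [.inl h, .inr (.inl h), .inr (.inr ⟨_, hP, hQ⟩)]
  · rintro (h | h | ⟨x, hP, hQ⟩)
    exacts [.par_l h, .par_r h, .sync hP hQ]

theorem restr_iff : Interacts env (.restr P L) ↔ Interacts env P :=
  ⟨by rintro ⟨⟩; assumption, .restr⟩

theorem hide_iff : Interacts env (.hide P L) ↔ Interacts env P ∨ ∃ x, Exposes env P x := by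
  constructor
  · rintro (h | h)
    exacts [.inl h, .inr ⟨_, h⟩]
  · rintro (h | ⟨x, h⟩)
    exacts [.hide h, .hide_exposes h]

theorem ident_iff : Interacts env (.ident n) ↔ Interacts env (env n) :=
  ⟨by rintro ⟨⟩; assumption, .ident⟩

theorem par_comm_iff : Interacts env (.par P Q) ↔ Interacts env (.par Q P) := by
  rw [par_iff, par_iff, or_left_comm, Exposes.exists_bar_comm]

theorem par_assoc_iff :
    Interacts env (.par (.par P Q) R) ↔ Interacts env (.par P (.par Q R)) := by
  simp only [par_iff, Exposes.par_iff, or_and_right, and_or_left, exists_or, or_assoc, or_comm,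
    or_left_comm]

theorem restr_scope_par_iff (h : ∀ y, VisLabel env P y → y ∉ L ∧ y.bar ∉ L) :
    Interacts env (.restr (.par P Q) L) ↔ Interacts env (.par P (.restr Q L)) := by
  simp only [restr_iff, par_iff, Exposes.restr_iff, Label.bar_bar]
  grind [Exposes.visLabel]

theorem restr_distrib_par_iff
    (h : ∀ y, VisLabel env P y → VisLabel env Q y.bar → y ∉ L ∧ y.bar ∉ L) :
    Interacts env (.restr (.par P Q) L) ↔ Interacts env (.par (.restr P L) (.restr Q L)) := by
  simp only [restr_iff, par_iff, Exposes.restr_iff, Label.bar_bar]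
  grind [Exposes.visLabel]

end Interacts

theorem SC.interacts_iff (h : SC env P Q) : Interacts env P ↔ Interacts env Q := by
  induction h with
  | refl => rfl
  | symm _ ih => exact ih.symm
  | trans _ _ ih₁ ih₂ => exact ih₁.trans ih₂
  | pre_congr => simp only [Interacts.pre_iff]
  | sum_congr _ _ ih₁ ih₂ => simp only [Interacts.sum_iff, ih₁, ih₂]
  | par_congr h₁ h₂ ih₁ ih₂ =>
    simp only [Interacts.par_iff, ih₁, ih₂, h₁.exposes_iff, h₂.exposes_iff]
  | restr_congr _ ih => simp only [Interacts.restr_iff, ih]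
  | hide_congr h ih => simp only [Interacts.hide_iff, ih, h.exposes_iff]
  | const => exact Interacts.ident_iff
  | sum_comm => simp only [Interacts.sum_iff, or_comm]
  | sum_assoc => simp only [Interacts.sum_iff, or_assoc]
  | sum_zero => simp only [Interacts.sum_iff, Interacts.nil_iff, or_false]
  | sum_idem => simp only [Interacts.sum_iff, or_self]
  | par_comm => exact Interacts.par_comm_iff
  | par_assoc => exact Interacts.par_assoc_iff
  | par_zero => simp [Interacts.par_iff, Interacts.nil_iff, Exposes.nil_iff]
  | restr_restr | restr_nil => simp only [Interacts.restr_iff]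
  | hide_hide => simp [Interacts.hide_iff, Exposes.hide_iff]
  | hide_nil => simp [Interacts.hide_iff, Interacts.nil_iff, Exposes.nil_iff]
  | restr_pre_in | restr_pre_out =>
    simp only [Interacts.restr_iff, Interacts.pre_iff, Interacts.nil_iff]
  | restr_sum | restr_scope_sum => simp only [Interacts.restr_iff, Interacts.sum_iff]
  | restr_scope_par h => exact Interacts.restr_scope_par_iff h
  | restr_par h => exact Interacts.restr_distrib_par_iff h

theorem vis_notMem_visSet_union_barSet (h : x ∉ L) (h' : x.bar ∉ L) :
    Act.vis x ∉ visSet (L ∪ barSet L) := by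
  rintro ⟨_, hx | ⟨y, hy, rfl⟩, ⟨⟩⟩
  · exact h hx
  · exact h' (by rwa [Label.bar_bar])

variable {a : Act} {H : Set Act} {π : Policy}

theorem Step.interacts_or_prefixStepMod (h : Step env P a H R P') :
    Interacts env P ∨ ∃ x K, a = .vis x ∧ PrefixStepMod env P x K P' ∧
      H ⊆ visSet K ∧ (x ∈ K → Act.vis x ∈ H) := by
  induction h with
  | act => exact .inr ⟨_, _, rfl, ⟨_, .pre, .refl _⟩, subset_rfl, fun h => ⟨_, h, rfl⟩⟩
  | struct _ hP hP' _ ih =>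
    rw [hP.interacts_iff]
    refine ih.imp_right ?_
    rintro ⟨x, K, ha, t, hH⟩
    exact ⟨x, K, ha, hP.prefixStepMod_iff.2 (t.target_congr hP'.symm), hH⟩
  | sum_l _ ih =>
    refine ih.imp .sum_l ?_
    rintro ⟨x, K, ha, t, hH⟩
    exact ⟨x, K, ha, PrefixStepMod.sum_iff.2 (.inl t), hH⟩
  | sum_r _ ih =>
    refine ih.imp .sum_r ?_
    rintro ⟨x, K, ha, t, hH⟩
    exact ⟨x, K, ha, PrefixStepMod.sum_iff.2 (.inr t), hH⟩
  | par_l _ _ ih =>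
    refine ih.imp .par_l ?_
    rintro ⟨x, K, ha, ⟨_, t, hS⟩, hH⟩
    exact ⟨x, K, ha, ⟨_, .par_l t, .par_congr hS (.refl _)⟩, hH⟩
  | par_r _ _ ih =>
    refine ih.imp .par_r ?_
    rintro ⟨x, K, ha, ⟨_, t, hS⟩, hH⟩
    exact ⟨x, K, ha, ⟨_, .par_r t, .par_congr (.refl _) hS⟩, hH⟩
  | par_sync _ _ ihP ihQ =>
    rcases ihP with ihP | ⟨_, _, ⟨⟩, ⟨_, tP, _⟩, _⟩
    · exact .inl ihP.par_l
    rcases ihQ with ihQ | ⟨_, _, ⟨⟩, ⟨_, tQ, _⟩, _⟩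
    · exact .inl ihQ.par_r
    exact .inl (.sync ⟨_, _, tP⟩ ⟨_, _, tQ⟩)
  | restr _ hL ih =>
    refine ih.imp .restr ?_
    rintro ⟨x, K, ha, ⟨_, t, hS⟩, hHK, hxH⟩
    obtain ⟨hx, hx'⟩ := hL x ha
    exact ⟨x, K, ha, ⟨_, t.restr hx hx', hS.restr_congr⟩, Set.sdiff_subset.trans hHK,
      fun hxK => ⟨hxH hxK, vis_notMem_visSet_union_barSet hx hx'⟩⟩
  | hide_keep _ _ ih | hide_tau _ _ ih =>
    exact .inl (ih.elim .hide fun ⟨_, _, _, ⟨_, t, _⟩, _⟩ => .hide_exposes ⟨_, _, t⟩)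

theorem Step.of_pre (h : Step env (.pre l K Q) a H R S) :
    a = .vis l ∧ SC env Q S ∧ H ⊆ visSet K ∧ (l ∈ K → Act.vis l ∈ H) := by
  obtain ⟨x, K', ha, t, hH⟩ := h.interacts_or_prefixStepMod.resolve_left Interacts.pre_iff.1
  obtain ⟨rfl, rfl, hS⟩ := PrefixStepMod.pre_iff.1 t
  exact ⟨ha, hS, hH⟩

theorem SC.step_of_step (h : SC env P Q) (hQ : Step env Q a H R S) : Step env P a H R S :=
  .struct hQ h (.refl S) (.refl R)

theorem Deriv.of_pre (h : Deriv env (.pre l K Q) S) :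
    S = .pre l K Q ∨ ∃ Q', Deriv env Q Q' ∧ SC env Q' S := by
  induction h with
  | refl => exact .inl rfl
  | tail _ hs ih =>
    obtain ⟨a, H, R, hs⟩ := hs
    rcases ih with rfl | ⟨Q', hQ', hQ'S⟩
    · exact .inr ⟨Q, .refl, hs.of_pre.2.1⟩
    · exact .inr ⟨_, hQ'.tail ⟨a, H, R, hQ'S.step_of_step hs⟩, .refl _⟩

theorem Coherent.pre (hQ : Coherent env Q) (hl : l.isChan → l ∈ K) :
    Coherent env (.pre l K Q) := by
  intro S hS a₁ H₁ E₁ Q₁ a₂ H₂ E₂ Q₂ step₁ step₂ hne hfree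
  rcases hS.of_pre with rfl | ⟨Q', hQ', hQ'S⟩
  · obtain ⟨rfl, hQ₁, -⟩ := step₁.of_pre
    obtain ⟨rfl, hQ₂, -, hlH₂⟩ := step₂.of_pre
    rcases hne with hne | hne | ⟨⟨_, hchan, ⟨⟩⟩, -, hlH₂', -⟩
    · exact (hne rfl).elim
    · exact (hne (hQ₁.symm.trans hQ₂)).elim
    · exact (hlH₂' (hlH₂ (hl hchan))).elim
  · exact hQ Q' hQ' _ _ _ _ _ _ _ _ (hQ'S.step_of_step step₁) (hQ'S.step_of_step step₂) hne hfree

theorem Conforms.pre (hQ : Conforms env Q π) (hl : l ∈ π.alph) (hK : ∀ l' ∈ K, π.prec l' l) :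
    Conforms env (.pre l K Q) π := by
  intro S hS x H R S' step
  rcases hS.of_pre with rfl | ⟨Q', hQ', hQ'S⟩
  · obtain ⟨⟨⟩, -, hHK, -⟩ := step.of_pre
    refine ⟨hl, fun l' hl' => ?_⟩
    obtain ⟨_, hl'K, ⟨⟩⟩ := hHK hl'
    exact hK l' hl'K
  · exact hQ Q' hQ' x H R S' (hQ'S.step_of_step step)

end

theorem prefix_coherent_general (env : ℕ → Proc) (Q : Proc) (π : Policy) (l : Label)
    (hl : l ∈ π.alph) (hQ : Spec env Q π) (H : Set Label)
    (hmem : l.isChan → l ∈ H) (hsub : H ⊆ {l' | π.prec l' l}) :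
    Spec env (Proc.pre l H Q) π :=
  ⟨hQ.1.pre hmem, hQ.2.pre hl hsub⟩

/-- Coherence of rendez-vous prefixes. -/
theorem prefix_coherent (env : ℕ → Proc) (Q : Proc) (π : Policy) (l : Label)
    (hl : l.isChan) (hQ : Spec env Q π) (H : Set Label)
    (hmem : l ∈ H) (hsub : H ⊆ {l' | π.prec l' l}) :
    Spec env (Proc.pre l H Q) π :=
  prefix_coherent_general env Q π l (π.prec_dom (hsub hmem)).1 hQ H (fun _ => hmem) hsub

end CCSspt
end
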